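/- arXiv:1202.6259 — 5 statements merged into one kernel-verified Lean document; each statement's English description precedes it below -/
import Mathlib

section
/- Let u and v be Borel probability measures on X with finite supports U and V. Then d_3(u,v) ≥ d_5(u,v). -/
open Set MeasureTheory

namespace Stmt10

variable (K : Type*) [Fintype K]

/-- The simplex `Δ(K)` of probability vectors on `K`, inside `K → ℝ`
(endowed with the ℓ¹ norm, written explicitly as sums of absolute values below). -/
def Δ : Set (K → ℝ) := {p | (∀ k, 0 ≤ p k) ∧ ∑ k, p k = 1}

/-- The pairing `u(f) = ∫_X f du`. -/
noncomputable def pairing (u : ProbabilityMeasure (Δ K)) (f : C(Δ K, ℝ)) : ℝ :=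
  ∫ p, f p ∂(u : Measure (Δ K))

/-- `M₃(u,v)`: finite positive measures `γ` on `X²×[0,1]²` whose suitably weighted
marginals are `u` and `v`. -/
def M3 (u v : ProbabilityMeasure (Δ K)) :
    Set (Measure (Δ K × Δ K × Icc (0:ℝ) 1 × Icc (0:ℝ) 1)) :=
  {γ | IsFiniteMeasure γ ∧ ∀ f : C(Δ K, ℝ),
    (∫ p, (p.2.2.1 : ℝ) * f p.1 ∂γ = pairing K u f) ∧
    (∫ p, (p.2.2.2 : ℝ) * f p.2.1 ∂γ = pairing K v f)}

noncomputable def d3 (u v : ProbabilityMeasure (Δ K)) : ℝ :=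
  sInf ((fun γ => ∫ p,
      ∑ k, |(p.2.2.1 : ℝ) * (p.1 : K → ℝ) k - (p.2.2.2 : ℝ) * (p.2.1 : K → ℝ) k| ∂γ) ''
    M3 K u v)

/-- `M₅(u,v)` for finitely supported `u, v`, described through the supports `U, V` and the
weight functions `wu, wv`: subprobability couplings. -/
def M5 (U V : Finset (Δ K)) (wu wv : Δ K → ℝ) :
    Set ((Δ K → Δ K → ℝ) × (Δ K → Δ K → ℝ)) :=
  {ab | (∀ x ∈ U, ∀ y ∈ V, 0 ≤ ab.1 x y ∧ 0 ≤ ab.2 x y) ∧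
    (∀ x ∈ U, ∑ y ∈ V, ab.1 x y ≤ wu x) ∧ (∀ y ∈ V, ∑ x ∈ U, ab.2 x y ≤ wv y)}

noncomputable def cost5 (U V : Finset (Δ K))
    (ab : (Δ K → Δ K → ℝ) × (Δ K → Δ K → ℝ)) : ℝ :=
  2 + ∑ x ∈ U, ∑ y ∈ V,
    ((∑ k, |ab.1 x y * (x : K → ℝ) k - ab.2 x y * (y : K → ℝ) k|) - ab.1 x y - ab.2 x y)

noncomputable def d5 (U V : Finset (Δ K)) (wu wv : Δ K → ℝ) : ℝ :=
  sInf (cost5 K U V '' M5 K U V wu wv)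

end Stmt10

/-!
For mass `0 ≤ λ, μ` placed at points `x, y` of the unit sphere of a normed space, write
`c(λ, μ) = ‖λ x - μ y‖ - λ - μ`. Then `c` is sublinear in `(λ, μ)`, and it vanishes as soon as
`λ = 0` or `μ = 0`. Given `γ ∈ M₃(u,v)`, let `α(x,y)` and `β(x,y)` be the integrals of `λ` and `μ`
over the part of `γ` lying above `(x,y)`. Outside `U × V` one of `λ, μ` is almost everywhere zero,
so `∫ ‖λ x - μ y‖ dγ - 2 = ∫ c dγ` is a sum over `U × V`, and by Jensen's inequality each of its
terms is at least `c(α(x,y), β(x,y))`. The simplex `Δ(K)` enters only as a part of the unit sphere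
of `ℓ¹(K)`.
-/

namespace Stmt10

section MatchingCost

variable {E : Type*} [NormedAddCommGroup E] [NormedSpace ℝ E]

/-- The summand `‖a x - b y‖ - a - b` of `d₅`: the cost of matching mass `a` at `x` with mass `b`
at `y`, counted relative to leaving both unmatched. -/
noncomputable def matchingCost (a b : ℝ) (x y : E) : ℝ :=
  ‖a • x - b • y‖ - a - b

lemma neg_add_le_matchingCost (a b : ℝ) (x y : E) : -(a + b) ≤ matchingCost a b x y := by
  unfold matchingCost
  linarith [norm_nonneg (a • x - b • y)]

lemma matchingCost_zero_left {b : ℝ} (hb : 0 ≤ b) (x : E) {y : E} (hy : ‖y‖ = 1) :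
    matchingCost 0 b x y = 0 := by
  simp [matchingCost, norm_smul, hy, abs_of_nonneg hb]

lemma matchingCost_zero_right {a : ℝ} (ha : 0 ≤ a) {x : E} (hx : ‖x‖ = 1) (y : E) :
    matchingCost a 0 x y = 0 := by
  simp [matchingCost, norm_smul, hx, abs_of_nonneg ha]

variable {Ω : Type*} [MeasurableSpace Ω] {γ : Measure Ω} {l m : Ω → ℝ}

lemma norm_integral_smul_sub_le (hl : Integrable l γ) (hm : Integrable m γ) (x y : E) :
    ‖(∫ p, l p ∂γ) • x - (∫ p, m p ∂γ) • y‖ ≤ ∫ p, ‖l p • x - m p • y‖ ∂γ := by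
  -- `E` need not be complete, so the vector-valued integral is taken in its completion.
  let x' : UniformSpace.Completion E := x
  let y' : UniformSpace.Completion E := y
  have norm_completion (a b : ℝ) : ‖a • x - b • y‖ = ‖a • x' - b • y'‖ := by
    rw [← UniformSpace.Completion.norm_coe, UniformSpace.Completion.coe_sub,
      UniformSpace.Completion.coe_smul, UniformSpace.Completion.coe_smul]
  simp only [norm_completion]
  rw [← integral_smul_const, ← integral_smul_const,
    ← integral_sub (hl.smul_const x') (hm.smul_const y')]
  exact norm_integral_le_integral_norm _

lemma integrable_norm_smul_sub_smul {f g : Ω → E} (hl : Integrable l γ) (hm : Integrable m γ)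
    (hf : AEStronglyMeasurable f γ) (hg : AEStronglyMeasurable g γ)
    (hf_norm : ∀ p, ‖f p‖ = 1) (hg_norm : ∀ p, ‖g p‖ = 1) :
    Integrable (fun p => ‖l p • f p - m p • g p‖) γ := by
  refine (hl.norm.add hm.norm).mono'
    ((hl.aestronglyMeasurable.smul hf).sub (hm.aestronglyMeasurable.smul hg)).norm
    (.of_forall fun p => ?_)
  calc ‖‖l p • f p - m p • g p‖‖ = ‖l p • f p - m p • g p‖ := norm_norm _
    _ ≤ ‖l p • f p‖ + ‖m p • g p‖ := norm_sub_le _ _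
    _ = ‖l p‖ + ‖m p‖ := by simp only [norm_smul, hf_norm, hg_norm, mul_one]

lemma integral_matchingCost {f g : Ω → E} (hl : Integrable l γ) (hm : Integrable m γ)
    (hfg : Integrable (fun p => ‖l p • f p - m p • g p‖) γ) :
    ∫ p, matchingCost (l p) (m p) (f p) (g p) ∂γ =
      (∫ p, ‖l p • f p - m p • g p‖ ∂γ) - (∫ p, l p ∂γ) - ∫ p, m p ∂γ := by
  simp only [matchingCost]
  rw [integral_sub, integral_sub hfg hl]
  exacts [hfg.sub hl, hm]

lemma matchingCost_integral_le (hl : Integrable l γ) (hm : Integrable m γ) (x y : E) :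
    matchingCost (∫ p, l p ∂γ) (∫ p, m p ∂γ) x y ≤ ∫ p, matchingCost (l p) (m p) x y ∂γ := by
  rw [integral_matchingCost hl hm ((hl.smul_const x).sub (hm.smul_const y)).norm, matchingCost]
  gcongr
  exact norm_integral_smul_sub_le hl hm x y

end MatchingCost

section Fibers

variable {Ω S : Type*} [MeasurableSpace Ω] [MeasurableSpace S] {γ : Measure Ω}

lemma setIntegral_preimage_finset [MeasurableSingletonClass S] {F : Type*} [NormedAddCommGroup F]
    [NormedSpace ℝ F] {T : Ω → S} (hT : Measurable T) {g : Ω → F} (hg : Integrable g γ)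
    (s : Finset S) :
    ∫ p in T ⁻¹' s, g p ∂γ = ∑ t ∈ s, ∫ p in T ⁻¹' {t}, g p ∂γ := by
  rw [← integral_biUnion_finset s (fun t _ => hT (measurableSet_singleton t))
    (fun _ _ _ _ hne => (disjoint_singleton.2 hne).preimage T) (fun _ _ => hg.integrableOn),
    ← preimage_iUnion₂]
  simp only [← Finset.mem_coe, biUnion_of_singleton]

lemma integrable_coe_unitInterval [IsFiniteMeasure γ] {w : Ω → Icc (0 : ℝ) 1} (hw : Measurable w) :
    Integrable (fun p => (w p : ℝ)) γ :=
  .of_mem_Icc 0 1 hw.subtype_val.aemeasurable (.of_forall fun p => (w p).2)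

lemma measureReal_map_withDensity_ofReal {w : Ω → ℝ} (hw : Integrable w γ) (hw_nonneg : 0 ≤ w)
    {T : Ω → S} (hT : Measurable T) {A : Set S} (hA : MeasurableSet A) :
    ((γ.withDensity fun p => ENNReal.ofReal (w p)).map T).real A = ∫ p in T ⁻¹' A, w p ∂γ := by
  rw [Measure.real, Measure.map_apply hT hA, withDensity_apply _ (hT hA),
    integral_eq_lintegral_of_nonneg_ae (.of_forall hw_nonneg) hw.aestronglyMeasurable.restrict]

lemma integral_eq_one_of_isProbabilityMeasure_map_withDensity {w : Ω → ℝ} (hw : Integrable w γ)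
    (hw_nonneg : 0 ≤ w) {T : Ω → S} (hT : Measurable T)
    [IsProbabilityMeasure ((γ.withDensity fun p => ENNReal.ofReal (w p)).map T)] :
    ∫ p, w p ∂γ = 1 := by
  rw [← setIntegral_univ, ← preimage_univ (f := T),
    ← measureReal_map_withDensity_ofReal hw hw_nonneg hT .univ, probReal_univ]

lemma ae_mem_of_map_withDensity_ofReal_compl_eq_zero {w : Ω → ℝ} (hw : AEMeasurable w γ)
    {T : Ω → S} (hT : Measurable T) {A : Set S} (hA : MeasurableSet A)
    (h : (γ.withDensity fun p => ENNReal.ofReal (w p)).map T Aᶜ = 0) :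
    ∀ᵐ p ∂γ, 0 < w p → T p ∈ A := by
  have h_ae : ∀ᵐ p ∂γ.withDensity (fun p => ENNReal.ofReal (w p)), T p ∈ A :=
    (ae_map_iff hT.aemeasurable hA).1 h
  filter_upwards [(ae_withDensity_iff' hw.ennreal_ofReal).1 h_ae] with p hp hpos
  exact hp (ENNReal.ofReal_pos.2 hpos).ne'

lemma map_withDensity_ofReal_eq_iff_forall_integral [TopologicalSpace S] [BorelSpace S]
    [HasOuterApproxClosed S] {w : Ω → ℝ} (hw : Integrable w γ) (hw_nonneg : 0 ≤ w)
    {T : Ω → S} (hT : Measurable T) {u : Measure S} [IsFiniteMeasure u] :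
    (γ.withDensity fun p => ENNReal.ofReal (w p)).map T = u ↔
      ∀ f : C(S, ℝ), ∫ p, w p * f (T p) ∂γ = ∫ x, f x ∂u := by
  have integral_map_density (f : C(S, ℝ)) :
      ∫ x, f x ∂(γ.withDensity fun p => ENNReal.ofReal (w p)).map T =
        ∫ p, w p * f (T p) ∂γ := by
    rw [integral_map hT.aemeasurable f.continuous.measurable.aestronglyMeasurable,
      integral_withDensity_eq_integral_toReal_smul₀ hw.aemeasurable.ennreal_ofReal
        (.of_forall fun _ => ENNReal.ofReal_lt_top)]
    simp only [ENNReal.toReal_ofReal (hw_nonneg _), smul_eq_mul]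
  have : IsFiniteMeasure (γ.withDensity fun p => ENNReal.ofReal (w p)) :=
    isFiniteMeasure_withDensity_ofReal hw.2
  refine ⟨fun h f => by rw [← integral_map_density, h], fun h => ?_⟩
  refine ext_of_forall_integral_eq_of_IsFiniteMeasure fun f => ?_
  exact (integral_map_density f.toContinuousMap).trans (h f.toContinuousMap)

end Fibers

section FiberMass

variable {Ω S S' : Type*} [MeasurableSpace Ω] {γ : Measure Ω} {w : Ω → ℝ} {X : Ω → S} {Y : Ω → S'}

/-- The part of the integral of the weight `w` that lies above `(x, y)`. It turns the weights of a
measure in `M₃(u,v)` into a pair in `M₅(u,v)`. -/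
noncomputable def fiberMass (γ : Measure Ω) (X : Ω → S) (Y : Ω → S') (w : Ω → ℝ) (x : S) (y : S') :
    ℝ :=
  ∫ p in (fun p => (X p, Y p)) ⁻¹' {(x, y)}, w p ∂γ

lemma fiberMass_nonneg (hw_nonneg : 0 ≤ w) (x : S) (y : S') : 0 ≤ fiberMass γ X Y w x y :=
  integral_nonneg hw_nonneg

variable [MeasurableSpace S] [MeasurableSpace S'] [MeasurableSingletonClass S]
  [MeasurableSingletonClass S']

lemma sum_fiberMass_right_le (hX : Measurable X) (hY : Measurable Y) (hw : Integrable w γ)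
    (hw_nonneg : 0 ≤ w) (x : S) (V : Finset S') :
    ∑ y ∈ V, fiberMass γ X Y w x y ≤ ∫ p in X ⁻¹' {x}, w p ∂γ := by
  calc ∑ y ∈ V, fiberMass γ X Y w x y
      = ∫ p in (fun p => (X p, Y p)) ⁻¹' ({x} ×ˢ V : Finset (S × S')), w p ∂γ := by
        simp only [fiberMass, setIntegral_preimage_finset (hX.prodMk hY) hw, Finset.sum_product,
          Finset.sum_singleton]
    _ ≤ ∫ p in X ⁻¹' {x}, w p ∂γ :=
        setIntegral_mono_set hw.integrableOn (.of_forall hw_nonneg)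
          (LE.le.eventuallyLE fun _ hp =>
            Finset.mem_singleton.1 (Finset.mem_product.1 hp).1)

lemma sum_fiberMass_left_le (hX : Measurable X) (hY : Measurable Y) (hw : Integrable w γ)
    (hw_nonneg : 0 ≤ w) (U : Finset S) (y : S') :
    ∑ x ∈ U, fiberMass γ X Y w x y ≤ ∫ p in Y ⁻¹' {y}, w p ∂γ := by
  calc ∑ x ∈ U, fiberMass γ X Y w x y
      = ∫ p in (fun p => (X p, Y p)) ⁻¹' (U ×ˢ {y} : Finset (S × S')), w p ∂γ := by
        simp only [fiberMass, setIntegral_preimage_finset (hX.prodMk hY) hw,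
          Finset.sum_product_right, Finset.sum_singleton]
    _ ≤ ∫ p in Y ⁻¹' {y}, w p ∂γ :=
        setIntegral_mono_set hw.integrableOn (.of_forall hw_nonneg)
          (LE.le.eventuallyLE fun _ hp =>
            Finset.mem_singleton.1 (Finset.mem_product.1 hp).2)

end FiberMass

section SumLeIntegral

variable {Ω S E : Type*} [MeasurableSpace Ω] [MeasurableSpace S] [MeasurableSingletonClass S]
  [NormedAddCommGroup E] [NormedSpace ℝ E] {γ : Measure Ω} {l m : Ω → ℝ} {X Y : Ω → S}
  {ι : S → E} {U V : Finset S}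

lemma integral_matchingCost_eq_sum_fibers (hX : Measurable X) (hY : Measurable Y)
    (hι : ∀ x, ‖ι x‖ = 1) (hl_nonneg : 0 ≤ l) (hm_nonneg : 0 ≤ m)
    (hlU : ∀ᵐ p ∂γ, 0 < l p → X p ∈ U) (hmV : ∀ᵐ p ∂γ, 0 < m p → Y p ∈ V)
    (hc : Integrable (fun p => matchingCost (l p) (m p) (ι (X p)) (ι (Y p))) γ) :
    ∫ p, matchingCost (l p) (m p) (ι (X p)) (ι (Y p)) ∂γ =
      ∑ x ∈ U, ∑ y ∈ V, ∫ p in (fun p => (X p, Y p)) ⁻¹' {(x, y)},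
        matchingCost (l p) (m p) (ι (X p)) (ι (Y p)) ∂γ := by
  have vanishes_off : ∀ᵐ p ∂γ, p ∉ (fun p => (X p, Y p)) ⁻¹' (U ×ˢ V : Finset (S × S)) →
      matchingCost (l p) (m p) (ι (X p)) (ι (Y p)) = 0 := by
    filter_upwards [hlU, hmV] with p hpU hpV hp
    rcases (hl_nonneg p).eq_or_lt with hl | hl
    · rw [← hl, Pi.zero_apply, matchingCost_zero_left (hm_nonneg p) _ (hι _)]
    rcases (hm_nonneg p).eq_or_lt with hm | hm
    · rw [← hm, Pi.zero_apply, matchingCost_zero_right (hl_nonneg p) (hι _)]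
    exact absurd (Finset.mem_product.2 ⟨hpU hl, hpV hm⟩) hp
  rw [← setIntegral_eq_integral_of_ae_compl_eq_zero vanishes_off,
    setIntegral_preimage_finset (hX.prodMk hY) hc, Finset.sum_product]

lemma sum_matchingCost_fiberMass_le (hX : Measurable X) (hY : Measurable Y)
    (hι : ∀ x, ‖ι x‖ = 1) (hl_nonneg : 0 ≤ l) (hm_nonneg : 0 ≤ m)
    (hl : Integrable l γ) (hm : Integrable m γ)
    (hlU : ∀ᵐ p ∂γ, 0 < l p → X p ∈ U) (hmV : ∀ᵐ p ∂γ, 0 < m p → Y p ∈ V)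
    (hc : Integrable (fun p => matchingCost (l p) (m p) (ι (X p)) (ι (Y p))) γ) :
    ∑ x ∈ U, ∑ y ∈ V, matchingCost (fiberMass γ X Y l x y) (fiberMass γ X Y m x y) (ι x) (ι y) ≤
      ∫ p, matchingCost (l p) (m p) (ι (X p)) (ι (Y p)) ∂γ := by
  rw [integral_matchingCost_eq_sum_fibers hX hY hι hl_nonneg hm_nonneg hlU hmV hc]
  refine Finset.sum_le_sum fun x _ => Finset.sum_le_sum fun y _ => ?_
  refine (matchingCost_integral_le hl.integrableOn hm.integrableOn (ι x) (ι y)).trans_eq ?_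
  refine setIntegral_congr_fun ((hX.prodMk hY) (measurableSet_singleton _)) fun p hp => ?_
  obtain ⟨rfl, rfl⟩ := Prod.mk.inj hp
  rfl

end SumLeIntegral

section Distances

variable {S E : Type*} [MeasurableSpace S] [NormedAddCommGroup E] [NormedSpace ℝ E]

/-- `M₃(u,v)` over an arbitrary measurable space. The conditions on `γ` are stated as identities of
measures, which for Borel measures on a compact metric space amount to testing against continuous
functions. -/
def weightedCouplings (u v : Measure S) : Set (Measure (S × S × Icc (0 : ℝ) 1 × Icc (0 : ℝ) 1)) :=
  {γ | IsFiniteMeasure γ ∧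
    (γ.withDensity fun p => ENNReal.ofReal p.2.2.1).map (fun p => p.1) = u ∧
    (γ.withDensity fun p => ENNReal.ofReal p.2.2.2).map (fun p => p.2.1) = v}

/-- `d₃(u,v)` for measures on a space `S` mapped by `ι` into a normed space. -/
noncomputable def weightedCouplingDist (ι : S → E) (u v : Measure S) : ℝ :=
  sInf ((fun γ => ∫ p, ‖(p.2.2.1 : ℝ) • ι p.1 - (p.2.2.2 : ℝ) • ι p.2.1‖ ∂γ) ''
    weightedCouplings u v)

/-- `M₅(u,v)` over an arbitrary measurable space, for measures carried by `U` and `V`. -/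
def subcouplings (U V : Finset S) (u v : Measure S) : Set ((S → S → ℝ) × (S → S → ℝ)) :=
  {ab | (∀ x ∈ U, ∀ y ∈ V, 0 ≤ ab.1 x y ∧ 0 ≤ ab.2 x y) ∧
    (∀ x ∈ U, ∑ y ∈ V, ab.1 x y ≤ u.real {x}) ∧ (∀ y ∈ V, ∑ x ∈ U, ab.2 x y ≤ v.real {y})}

/-- The function minimised in `d₅(u,v)`, for points of a space `S` mapped by `ι` into a normed
space. -/
noncomputable def subcouplingCost (ι : S → E) (U V : Finset S)
    (ab : (S → S → ℝ) × (S → S → ℝ)) : ℝ :=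
  2 + ∑ x ∈ U, ∑ y ∈ V, matchingCost (ab.1 x y) (ab.2 x y) (ι x) (ι y)

/-- `d₅(u,v)` for measures carried by `U` and `V` on a space `S` mapped by `ι` into a normed
space. -/
noncomputable def subcouplingDist (ι : S → E) (U V : Finset S) (u v : Measure S) : ℝ :=
  sInf (subcouplingCost ι U V '' subcouplings U V u v)

lemma weightedCouplings_nonempty (u v : Measure S) [IsProbabilityMeasure u]
    [IsProbabilityMeasure v] : (weightedCouplings u v).Nonempty := by
  let φ : S × S → S × S × Icc (0 : ℝ) 1 × Icc (0 : ℝ) 1 := fun q => (q.1, q.2, 1, 1)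
  have hφ : Measurable φ := by fun_prop
  have weights_eq_one : ∀ᵐ p ∂(u.prod v).map φ, p.2.2 = (1, 1) :=
    (ae_map_iff hφ.aemeasurable (measurable_snd.snd (measurableSet_singleton _))).2
      (.of_forall fun _ => rfl)
  have left_density : (fun p : S × S × Icc (0 : ℝ) 1 × Icc (0 : ℝ) 1 => ENNReal.ofReal p.2.2.1)
      =ᵐ[(u.prod v).map φ] 1 := weights_eq_one.mono fun p hp => by simp [hp]
  have right_density : (fun p : S × S × Icc (0 : ℝ) 1 × Icc (0 : ℝ) 1 => ENNReal.ofReal p.2.2.2)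
      =ᵐ[(u.prod v).map φ] 1 := weights_eq_one.mono fun p hp => by simp [hp]
  refine ⟨(u.prod v).map φ, inferInstance, ?_, ?_⟩
  · rw [withDensity_congr_ae left_density, withDensity_one, Measure.map_map (by fun_prop) hφ]
    exact Measure.fst_prod
  · rw [withDensity_congr_ae right_density, withDensity_one, Measure.map_map (by fun_prop) hφ]
    exact Measure.snd_prod

variable [MeasurableSingletonClass S]

lemma subcouplingCost_nonneg (ι : S → E) {U V : Finset S} {u v : Measure S}
    [IsProbabilityMeasure u] [IsProbabilityMeasure v] {ab : (S → S → ℝ) × (S → S → ℝ)}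
    (hab : ab ∈ subcouplings U V u v) : 0 ≤ subcouplingCost ι U V ab := by
  have hα : ∑ x ∈ U, ∑ y ∈ V, ab.1 x y ≤ 1 :=
    calc _ ≤ ∑ x ∈ U, u.real {x} := Finset.sum_le_sum hab.2.1
      _ ≤ 1 := (sum_measureReal_singleton U).trans_le measureReal_le_one
  have hβ : ∑ x ∈ U, ∑ y ∈ V, ab.2 x y ≤ 1 :=
    calc _ = ∑ y ∈ V, ∑ x ∈ U, ab.2 x y := Finset.sum_comm
      _ ≤ ∑ y ∈ V, v.real {y} := Finset.sum_le_sum hab.2.2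
      _ ≤ 1 := (sum_measureReal_singleton V).trans_le measureReal_le_one
  have h_sum : ∑ x ∈ U, ∑ y ∈ V, -(ab.1 x y + ab.2 x y) ≤
      ∑ x ∈ U, ∑ y ∈ V, matchingCost (ab.1 x y) (ab.2 x y) (ι x) (ι y) :=
    Finset.sum_le_sum fun x _ => Finset.sum_le_sum fun y _ => neg_add_le_matchingCost _ _ _ _
  simp only [Finset.sum_neg_distrib, Finset.sum_add_distrib] at h_sum
  unfold subcouplingCost
  linarith

variable {Ω : Type*} [MeasurableSpace Ω] {γ : Measure Ω} {l m : Ω → ℝ} {X Y : Ω → S}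
  {U V : Finset S} {u v : Measure S}

lemma fiberMass_mem_subcouplings (hX : Measurable X) (hY : Measurable Y)
    (hl : Integrable l γ) (hm : Integrable m γ) (hl_nonneg : 0 ≤ l) (hm_nonneg : 0 ≤ m)
    (hu : (γ.withDensity fun p => ENNReal.ofReal (l p)).map X = u)
    (hv : (γ.withDensity fun p => ENNReal.ofReal (m p)).map Y = v) :
    (fiberMass γ X Y l, fiberMass γ X Y m) ∈ subcouplings U V u v := by
  refine ⟨fun x _ y _ => ⟨fiberMass_nonneg hl_nonneg x y, fiberMass_nonneg hm_nonneg x y⟩,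
    fun x _ => ?_, fun y _ => ?_⟩
  · rw [← hu, measureReal_map_withDensity_ofReal hl hl_nonneg hX (measurableSet_singleton x)]
    exact sum_fiberMass_right_le hX hY hl hl_nonneg x V
  · rw [← hv, measureReal_map_withDensity_ofReal hm hm_nonneg hY (measurableSet_singleton y)]
    exact sum_fiberMass_left_le hX hY hm hm_nonneg U y

lemma subcouplingCost_fiberMass_le [IsProbabilityMeasure u] [IsProbabilityMeasure v] {ι : S → E}
    (hι : StronglyMeasurable ι) (hι_norm : ∀ x, ‖ι x‖ = 1) (hX : Measurable X) (hY : Measurable Y)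
    (hl : Integrable l γ) (hm : Integrable m γ) (hl_nonneg : 0 ≤ l) (hm_nonneg : 0 ≤ m)
    (hu : (γ.withDensity fun p => ENNReal.ofReal (l p)).map X = u)
    (hv : (γ.withDensity fun p => ENNReal.ofReal (m p)).map Y = v)
    (hU : u (U : Set S)ᶜ = 0) (hV : v (V : Set S)ᶜ = 0) :
    subcouplingCost ι U V (fiberMass γ X Y l, fiberMass γ X Y m) ≤
      ∫ p, ‖l p • ι (X p) - m p • ι (Y p)‖ ∂γ := by
  subst hu hv
  have h_norm : Integrable (fun p => ‖l p • ι (X p) - m p • ι (Y p)‖) γ :=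
    integrable_norm_smul_sub_smul hl hm (hι.comp_measurable hX).aestronglyMeasurable
      (hι.comp_measurable hY).aestronglyMeasurable (fun p => hι_norm _) (fun p => hι_norm _)
  have h_sum := sum_matchingCost_fiberMass_le hX hY hι_norm hl_nonneg hm_nonneg hl hm
    (ae_mem_of_map_withDensity_ofReal_compl_eq_zero hl.aemeasurable hX U.measurableSet hU)
    (ae_mem_of_map_withDensity_ofReal_compl_eq_zero hm.aemeasurable hY V.measurableSet hV)
    ((h_norm.sub hl).sub hm)
  rw [integral_matchingCost hl hm h_norm,
    integral_eq_one_of_isProbabilityMeasure_map_withDensity hl hl_nonneg hX,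
    integral_eq_one_of_isProbabilityMeasure_map_withDensity hm hm_nonneg hY] at h_sum
  unfold subcouplingCost
  linarith

lemma subcouplingDist_le_integral [IsProbabilityMeasure u] [IsProbabilityMeasure v] {ι : S → E}
    (hι : StronglyMeasurable ι) (hι_norm : ∀ x, ‖ι x‖ = 1)
    (hU : u (U : Set S)ᶜ = 0) (hV : v (V : Set S)ᶜ = 0)
    {γ : Measure (S × S × Icc (0 : ℝ) 1 × Icc (0 : ℝ) 1)} (hγ : γ ∈ weightedCouplings u v) :
    subcouplingDist ι U V u v ≤
      ∫ p, ‖(p.2.2.1 : ℝ) • ι p.1 - (p.2.2.2 : ℝ) • ι p.2.1‖ ∂γ := by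
  obtain ⟨_, hu, hv⟩ := hγ
  have hl : Integrable (fun p => (p.2.2.1 : ℝ)) γ := integrable_coe_unitInterval (by fun_prop)
  have hm : Integrable (fun p => (p.2.2.2 : ℝ)) γ := integrable_coe_unitInterval (by fun_prop)
  have bddBelow_costs : BddBelow (subcouplingCost ι U V '' subcouplings U V u v) :=
    ⟨0, forall_mem_image.2 fun _ => subcouplingCost_nonneg ι⟩
  calc subcouplingDist ι U V u v
      ≤ subcouplingCost ι U V
          (fiberMass γ (·.1) (·.2.1) (·.2.2.1), fiberMass γ (·.1) (·.2.1) (·.2.2.2)) :=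
        csInf_le bddBelow_costs (mem_image_of_mem _ (fiberMass_mem_subcouplings (by fun_prop)
          (by fun_prop) hl hm (fun p => p.2.2.1.2.1) (fun p => p.2.2.2.2.1) hu hv))
    _ ≤ ∫ p, ‖(p.2.2.1 : ℝ) • ι p.1 - (p.2.2.2 : ℝ) • ι p.2.1‖ ∂γ :=
        subcouplingCost_fiberMass_le hι hι_norm (by fun_prop) (by fun_prop) hl hm
          (fun p => p.2.2.1.2.1) (fun p => p.2.2.2.2.1) hu hv hU hV

end Distances

end Stmt10

theorem stmt10_general {S E : Type*} [MeasurableSpace S] [MeasurableSingletonClass S]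
    [NormedAddCommGroup E] [NormedSpace ℝ E] {ι : S → E} (hι : StronglyMeasurable ι)
    (hι_norm : ∀ x, ‖ι x‖ = 1) {u v : Measure S} [IsProbabilityMeasure u] [IsProbabilityMeasure v]
    {U V : Finset S} (hU : u (U : Set S)ᶜ = 0) (hV : v (V : Set S)ᶜ = 0) :
    Stmt10.weightedCouplingDist ι u v ≥ Stmt10.subcouplingDist ι U V u v :=
  le_csInf ((Stmt10.weightedCouplings_nonempty u v).image _)
    (forall_mem_image.2 fun _ hγ => Stmt10.subcouplingDist_le_integral hι hι_norm hU hV hγ)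

namespace Stmt10

section Simplex

variable {K : Type*} [Fintype K]

/-- The inclusion of `Δ(K)` into `ℓ¹(K)`, whose norm is the one used in `d₃` and `d₅`. -/
def toL1 (p : Δ K) : PiLp 1 fun _ : K => ℝ :=
  WithLp.toLp 1 p

lemma continuous_toL1 : Continuous (toL1 (K := K)) :=
  (PiLp.continuous_toLp 1 _).comp continuous_subtype_val

lemma norm_smul_toL1_sub (a b : ℝ) (x y : Δ K) :
    ‖a • toL1 x - b • toL1 y‖ = ∑ k, |a * (x : K → ℝ) k - b * (y : K → ℝ) k| := by
  simp [PiLp.norm_eq_of_L1, toL1]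

lemma norm_toL1 (x : Δ K) : ‖toL1 x‖ = 1 := by
  simp only [PiLp.norm_eq_of_L1, toL1, Real.norm_eq_abs, abs_of_nonneg (x.2.1 _), x.2.2]

lemma M3_eq_weightedCouplings (u v : ProbabilityMeasure (Δ K)) :
    M3 K u v = weightedCouplings (u : Measure (Δ K)) v := by
  ext γ
  refine and_congr_right fun _ => ?_
  have hl : Integrable (fun p => (p.2.2.1 : ℝ)) γ := integrable_coe_unitInterval (by fun_prop)
  have hm : Integrable (fun p => (p.2.2.2 : ℝ)) γ := integrable_coe_unitInterval (by fun_prop)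
  rw [map_withDensity_ofReal_eq_iff_forall_integral hl (fun p => p.2.2.1.2.1) (by fun_prop),
    map_withDensity_ofReal_eq_iff_forall_integral hm (fun p => p.2.2.2.2.1) (by fun_prop)]
  exact forall_and

lemma d3_eq_weightedCouplingDist (u v : ProbabilityMeasure (Δ K)) :
    d3 K u v = weightedCouplingDist toL1 (u : Measure (Δ K)) v := by
  simp only [d3, weightedCouplingDist, M3_eq_weightedCouplings, norm_smul_toL1_sub]

lemma d5_eq_subcouplingDist {U V : Finset (Δ K)} {wu wv : Δ K → ℝ} {u v : Measure (Δ K)}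
    (hu : ∀ x ∈ U, u.real {x} = wu x) (hv : ∀ y ∈ V, v.real {y} = wv y) :
    d5 K U V wu wv = subcouplingDist toL1 U V u v := by
  have hM : M5 K U V wu wv = subcouplings U V u v := by
    ext ab
    simp +contextual only [M5, subcouplings, mem_ofPred_eq, hu, hv]
  have hc : cost5 K U V = subcouplingCost toL1 U V := by
    ext ab
    simp only [cost5, subcouplingCost, matchingCost, norm_smul_toL1_sub]
  rw [d5, subcouplingDist, hM, hc]

end Simplex

section FiniteSums

variable {S : Type*} [MeasurableSpace S] [MeasurableSingletonClass S] (U : Finset S) (w : S → ℝ)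

lemma sum_ofReal_smul_dirac_compl :
    (∑ x ∈ U, ENNReal.ofReal (w x) • Measure.dirac x) (U : Set S)ᶜ = 0 := by
  rw [Measure.finsetSum_apply]
  refine Finset.sum_eq_zero fun x hx => ?_
  simp [hx]

lemma measureReal_sum_ofReal_smul_dirac_singleton {x : S} (hx : x ∈ U) (hw : 0 ≤ w x) :
    (∑ x ∈ U, ENNReal.ofReal (w x) • Measure.dirac x).real {x} = w x := by
  classical
  rw [Measure.real, Measure.finsetSum_apply, Finset.sum_eq_single_of_mem x hx]
  · simp [hw]
  · intro y _ hy
    simp [hy]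

end FiniteSums

end Stmt10

/-- **Lemma 5 (Renault–Venel).** Let `u, v` be Borel probability measures on `X = Δ(K)`
with finite supports `U, V`. Then `d₃(u,v) ≥ d₅(u,v)`. -/
theorem stmt10 (K : Type*) [Fintype K] [Nonempty K]
    (u v : ProbabilityMeasure (Stmt10.Δ K))
    (U V : Finset (Stmt10.Δ K)) (wu wv : Stmt10.Δ K → ℝ)
    (hwu : ∀ x ∈ U, 0 < wu x) (hwv : ∀ y ∈ V, 0 < wv y)
    (hu : (u : Measure (Stmt10.Δ K)) = ∑ x ∈ U, ENNReal.ofReal (wu x) • Measure.dirac x)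
    (hv : (v : Measure (Stmt10.Δ K)) = ∑ y ∈ V, ENNReal.ofReal (wv y) • Measure.dirac y) :
    Stmt10.d3 K u v ≥ Stmt10.d5 K U V wu wv := by
  rw [Stmt10.d3_eq_weightedCouplingDist, Stmt10.d5_eq_subcouplingDist (u := u) (v := v)
    (fun x hx => hu ▸ Stmt10.measureReal_sum_ofReal_smul_dirac_singleton U wu hx (hwu x hx).le)
    (fun y hy => hv ▸ Stmt10.measureReal_sum_ofReal_smul_dirac_singleton V wv hy (hwv y hy).le)]
  exact stmt10_general Stmt10.continuous_toL1.stronglyMeasurable Stmt10.norm_toL1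
    (hu ▸ Stmt10.sum_ofReal_smul_dirac_compl U wu) (hv ▸ Stmt10.sum_ofReal_smul_dirac_compl V wv)
end

section
/- Let u and v be Borel probability measures on X with finite supports U and V. Then d_5(u,v) ≥ d_4(u,v). -/
open Set MeasureTheory

namespace Stmt11

variable (K : Type*) [Fintype K]

/-- The simplex `Δ(K)` of probability vectors on `K`, inside `K → ℝ`
(endowed with the ℓ¹ norm, written explicitly as sums of absolute values below). -/
def Δ : Set (K → ℝ) := {p | (∀ k, 0 ≤ p k) ∧ ∑ k, p k = 1}

/-- `M₄(u,v)` for finitely supported `u, v`, described through the supports `U, V` and the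
weight functions `wu, wv`. -/
def M4 (U V : Finset (Δ K)) (wu wv : Δ K → ℝ) :
    Set ((Δ K → Δ K → ℝ) × (Δ K → Δ K → ℝ)) :=
  {ab | (∀ x ∈ U, ∀ y ∈ V, 0 ≤ ab.1 x y ∧ 0 ≤ ab.2 x y) ∧
    (∀ x ∈ U, ∑ y ∈ V, ab.1 x y = wu x) ∧ (∀ y ∈ V, ∑ x ∈ U, ab.2 x y = wv y)}

noncomputable def cost4 (U V : Finset (Δ K))
    (ab : (Δ K → Δ K → ℝ) × (Δ K → Δ K → ℝ)) : ℝ :=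
  ∑ x ∈ U, ∑ y ∈ V, ∑ k, |ab.1 x y * (x : K → ℝ) k - ab.2 x y * (y : K → ℝ) k|

noncomputable def d4 (U V : Finset (Δ K)) (wu wv : Δ K → ℝ) : ℝ :=
  sInf (cost4 K U V '' M4 K U V wu wv)

/-- `M₅(u,v)`: subprobability couplings. -/
def M5 (U V : Finset (Δ K)) (wu wv : Δ K → ℝ) :
    Set ((Δ K → Δ K → ℝ) × (Δ K → Δ K → ℝ)) :=
  {ab | (∀ x ∈ U, ∀ y ∈ V, 0 ≤ ab.1 x y ∧ 0 ≤ ab.2 x y) ∧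
    (∀ x ∈ U, ∑ y ∈ V, ab.1 x y ≤ wu x) ∧ (∀ y ∈ V, ∑ x ∈ U, ab.2 x y ≤ wv y)}

noncomputable def cost5 (U V : Finset (Δ K))
    (ab : (Δ K → Δ K → ℝ) × (Δ K → Δ K → ℝ)) : ℝ :=
  2 + ∑ x ∈ U, ∑ y ∈ V,
    ((∑ k, |ab.1 x y * (x : K → ℝ) k - ab.2 x y * (y : K → ℝ) k|) - ab.1 x y - ab.2 x y)

noncomputable def d5 (U V : Finset (Δ K)) (wu wv : Δ K → ℝ) : ℝ :=
  sInf (cost5 K U V '' M5 K U V wu wv)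

end Stmt11

/-!
Since points of the simplex have norm one, each summand `‖α x - β y‖ - α - β` of the `d₅`-cost is
nonincreasing in both `α` and `β`. Hence enlarging a competitor for `d₅` until its marginals are
exactly `u` and `v` does not raise its cost; and once both marginals have mass one, the `d₅`-cost
coincides with the `d₄`-cost.
-/

namespace Stmt11

theorem real_univ_sum_smul_dirac {X : Type*} [MeasurableSpace X] {s : Finset X} {w : X → ℝ}
    (hw : ∀ x ∈ s, 0 ≤ w x) :
    (∑ x ∈ s, ENNReal.ofReal (w x) • Measure.dirac x).real univ = ∑ x ∈ s, w x := by
  have mass : (∑ x ∈ s, ENNReal.ofReal (w x) • Measure.dirac x) univ =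
      ENNReal.ofReal (∑ x ∈ s, w x) := by
    simp [Measure.coe_finsetSum, ENNReal.ofReal_sum_of_nonneg hw]
  rw [Measure.real, mass, ENNReal.toReal_ofReal (Finset.sum_nonneg hw)]

theorem exists_le_and_sum_eq {ι G : Type*} [AddCommGroup G] [PartialOrder G]
    [IsOrderedAddMonoid G] {s : Finset ι} (hs : s.Nonempty) {f : ι → G} {c : G}
    (h : ∑ i ∈ s, f i ≤ c) : ∃ g, f ≤ g ∧ ∑ i ∈ s, g i = c := by
  classical
  obtain ⟨i₀, hi₀⟩ := hs
  refine ⟨f + Pi.single i₀ (c - ∑ i ∈ s, f i), ?_, ?_⟩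
  · exact le_add_of_nonneg_right (Pi.single_nonneg.2 (sub_nonneg.2 h))
  · simp [Finset.sum_add_distrib, Pi.single_apply, hi₀]

variable {K : Type*} [Fintype K]

theorem sum_abs_mul_sub_mul_sub_weights_anti (x y : Δ K) {a a' b b' : ℝ} (ha : a ≤ a')
    (hb : b ≤ b') :
    (∑ k, |a' * (x : K → ℝ) k - b' * (y : K → ℝ) k|) - a' - b' ≤
      (∑ k, |a * (x : K → ℝ) k - b * (y : K → ℝ) k|) - a - b := by
  obtain ⟨x, hx_nonneg, hx_sum⟩ := x
  obtain ⟨y, hy_nonneg, hy_sum⟩ := y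
  have coordinate (k : K) :
      |a' * x k - b' * y k| ≤ |a * x k - b * y k| + (a' - a) * x k + (b' - b) * y k := by
    have hx := mul_nonneg (sub_nonneg.2 ha) (hx_nonneg k)
    have hy := mul_nonneg (sub_nonneg.2 hb) (hy_nonneg k)
    rw [abs_le]
    constructor <;>
      linarith [le_abs_self (a * x k - b * y k), neg_abs_le (a * x k - b * y k)]
  have total : ∑ k, |a' * x k - b' * y k| ≤
      (∑ k, |a * x k - b * y k|) + (a' - a) + (b' - b) := by
    simpa only [Finset.sum_add_distrib, ← Finset.mul_sum, hx_sum, hy_sum, mul_one] using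
      Finset.sum_le_sum fun k (_ : k ∈ Finset.univ) ↦ coordinate k
  linarith

variable {U V : Finset (Δ K)} {wu wv : Δ K → ℝ}
  {ab ab' : (Δ K → Δ K → ℝ) × (Δ K → Δ K → ℝ)}

theorem cost4_nonneg : 0 ≤ cost4 K U V ab := by
  unfold cost4
  positivity

theorem d4_le_cost4 (h : ab ∈ M4 K U V wu wv) : d4 K U V wu wv ≤ cost4 K U V ab :=
  csInf_le ⟨0, forall_mem_image.2 fun _ _ ↦ cost4_nonneg⟩ (mem_image_of_mem _ h)

theorem zero_mem_M5 (hwu : ∀ x ∈ U, 0 ≤ wu x) (hwv : ∀ y ∈ V, 0 ≤ wv y) :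
    0 ∈ M5 K U V wu wv :=
  ⟨fun _ _ _ _ ↦ ⟨le_rfl, le_rfl⟩, by simpa using hwu, by simpa using hwv⟩

theorem cost5_eq_cost4 (hU : ∑ x ∈ U, wu x = 1) (hV : ∑ y ∈ V, wv y = 1)
    (h : ab ∈ M4 K U V wu wv) : cost5 K U V ab = cost4 K U V ab := by
  obtain ⟨-, row_sum, column_sum⟩ := h
  have mass_left : ∑ x ∈ U, ∑ y ∈ V, ab.1 x y = 1 := by
    rw [Finset.sum_congr rfl row_sum, hU]
  have mass_right : ∑ x ∈ U, ∑ y ∈ V, ab.2 x y = 1 := by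
    rw [Finset.sum_comm, Finset.sum_congr rfl column_sum, hV]
  simp only [cost5, cost4, Finset.sum_sub_distrib, mass_left, mass_right]
  ring

theorem cost5_anti
    (h : ∀ x ∈ U, ∀ y ∈ V, ab.1 x y ≤ ab'.1 x y ∧ ab.2 x y ≤ ab'.2 x y) :
    cost5 K U V ab' ≤ cost5 K U V ab := by
  unfold cost5
  gcongr 2 + ∑ x ∈ U, ∑ y ∈ V, ?_ with x hx y hy
  exact sum_abs_mul_sub_mul_sub_weights_anti x y (h x hx y hy).1 (h x hx y hy).2

theorem exists_mem_M4_ge_of_mem_M5 (hU : U.Nonempty) (hV : V.Nonempty)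
    (h : ab ∈ M5 K U V wu wv) :
    ∃ ab' ∈ M4 K U V wu wv,
      ∀ x ∈ U, ∀ y ∈ V, ab.1 x y ≤ ab'.1 x y ∧ ab.2 x y ≤ ab'.2 x y := by
  obtain ⟨nonneg, row_sum_le, column_sum_le⟩ := h
  choose! a le_a row_sum using fun x hx ↦ exists_le_and_sum_eq hV (row_sum_le x hx)
  choose! b le_b column_sum using fun y hy ↦ exists_le_and_sum_eq hU (column_sum_le y hy)
  have le (x) (hx : x ∈ U) (y) (hy : y ∈ V) : ab.1 x y ≤ a x y ∧ ab.2 x y ≤ b y x :=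
    ⟨le_a x hx y, le_b y hy x⟩
  refine ⟨(a, fun x y ↦ b y x), ⟨fun x hx y hy ↦ ?_, row_sum, column_sum⟩, le⟩
  exact ⟨(nonneg x hx y hy).1.trans (le x hx y hy).1, (nonneg x hx y hy).2.trans (le x hx y hy).2⟩

theorem d4_le_cost5 (hU : ∑ x ∈ U, wu x = 1) (hV : ∑ y ∈ V, wv y = 1)
    (h : ab ∈ M5 K U V wu wv) : d4 K U V wu wv ≤ cost5 K U V ab := by
  have nonempty_left : U.Nonempty := Finset.nonempty_of_sum_ne_zero (hU ▸ one_ne_zero)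
  have nonempty_right : V.Nonempty := Finset.nonempty_of_sum_ne_zero (hV ▸ one_ne_zero)
  obtain ⟨ab', mem, le⟩ := exists_mem_M4_ge_of_mem_M5 nonempty_left nonempty_right h
  calc
    d4 K U V wu wv ≤ cost4 K U V ab' := d4_le_cost4 mem
    _ = cost5 K U V ab' := (cost5_eq_cost4 hU hV mem).symm
    _ ≤ cost5 K U V ab := cost5_anti le

end Stmt11

/-- **Lemma (Renault–Venel).** Let `u, v` be Borel probability measures on `X = Δ(K)`
with finite supports `U, V`. Then `d₅(u,v) ≥ d₄(u,v)`. -/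
theorem stmt11 (K : Type*) [Fintype K] [Nonempty K]
    (u v : ProbabilityMeasure (Stmt11.Δ K))
    (U V : Finset (Stmt11.Δ K)) (wu wv : Stmt11.Δ K → ℝ)
    (hwu : ∀ x ∈ U, 0 < wu x) (hwv : ∀ y ∈ V, 0 < wv y)
    (hu : (u : Measure (Stmt11.Δ K)) = ∑ x ∈ U, ENNReal.ofReal (wu x) • Measure.dirac x)
    (hv : (v : Measure (Stmt11.Δ K)) = ∑ y ∈ V, ENNReal.ofReal (wv y) • Measure.dirac y) :
    Stmt11.d5 K U V wu wv ≥ Stmt11.d4 K U V wu wv := by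
  have hwu' := fun x hx ↦ (hwu x hx).le
  have hwv' := fun y hy ↦ (hwv y hy).le
  have hU : ∑ x ∈ U, wu x = 1 := by
    rw [← Stmt11.real_univ_sum_smul_dirac hwu', ← hu, probReal_univ]
  have hV : ∑ y ∈ V, wv y = 1 := by
    rw [← Stmt11.real_univ_sum_smul_dirac hwv', ← hv, probReal_univ]
  refine le_csInf ((nonempty_of_mem (Stmt11.zero_mem_M5 hwu' hwv')).image _) ?_
  exact forall_mem_image.2 fun _ h ↦ Stmt11.d4_le_cost5 hU hV h
end

section
/- For each nonempty finite set S, the posterior mapping ψ_S is 1-Lipschitz from (Δ(K×S), ‖·‖₁) to (Δ_f(X), d_*): for all π, π' ∈ Δ(K×S), d_*(ψ_S(π), ψ_S(π')) ≤ ‖π − π'‖₁. Moreover, d_* is the largest distance with this property: for all u, v ∈ Δ_f(X), d_*(u,v) = inf{ ‖π − π'‖₁ : S a nonempty finite set, π, π' ∈ Δ(K×S), ψ_S(π) = u, ψ_S(π') = v }, and this infimum is attained. -/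
/-!
Taking `a = π(s)`, `x = p(s)`, `b = π'(s)`, `y = p'(s)` in the inequality defining `D₁` and summing
over `s` gives the Lipschitz bound. For the converse, a semicoupling of `u` and `v` of cost `r`
yields `π`, `π'` inducing `u`, `v` with `‖π − π'‖₁ = r`, and the pairs of weights together with the
upper bounds for the costs of their semicouplings form a closed convex cone. If no semicoupling
costs at most `d_*(u, v)`, a hyperplane separates `(u, v, d_*(u, v))` from this cone. Its
coefficients are dual variables `f` on the support of `u` and `g` on that of `v`, and a positively
homogeneous version of McShane's extension replaces both by a single function of `D₁`, which
contradicts the definition of `d_*`.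
-/

open Set MeasureTheory

namespace Stmt12

variable (K : Type*) [Fintype K]

/-- The simplex `Δ(K)` of probability vectors on `K`, inside `K → ℝ`
(endowed with the ℓ¹ norm, written explicitly as sums of absolute values below). -/
def Δ : Set (K → ℝ) := {p | (∀ k, 0 ≤ p k) ∧ ∑ k, p k = 1}

/-- `D₁ = {f ∈ C(Δ(K),ℝ) : ∀ x,y, ∀ a,b ≥ 0, a·f(x) − b·f(y) ≤ ‖a·x − b·y‖₁}`. -/
def D1 : Set C(Δ K, ℝ) :=
  {f | ∀ x y : Δ K, ∀ a b : ℝ, 0 ≤ a → 0 ≤ b →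
    a * f x - b * f y ≤ ∑ k, |a * (x : K → ℝ) k - b * (y : K → ℝ) k|}

/-- The pairing `u(f) = ∫_X f du`. -/
noncomputable def pairing (u : ProbabilityMeasure (Δ K)) (f : C(Δ K, ℝ)) : ℝ :=
  ∫ p, f p ∂(u : Measure (Δ K))

/-- The distance `d_*(u,v) = sup_{f ∈ D₁} (u(f) − v(f))`. -/
noncomputable def dstar (u v : ProbabilityMeasure (Δ K)) : ℝ :=
  sSup ((fun f => pairing K u f - pairing K v f) '' D1 K)

variable (S : Type*) [Fintype S]

/-- `π` is a probability vector on `K × S`. -/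
def IsProbVec (π : K × S → ℝ) : Prop := (∀ x, 0 ≤ π x) ∧ ∑ x, π x = 1

/-- `π(s) = Σ_k π(k,s)`. -/
def marg (π : K × S → ℝ) (s : S) : ℝ := ∑ k, π (k, s)

/-- `post` is a version of the posteriors of `π` on `K` given `s ∈ S`:
`p^k(s) = π(k,s)/π(s)` whenever `π(s) > 0` (arbitrary otherwise). -/
def IsPosterior (π : K × S → ℝ) (post : S → Δ K) : Prop :=
  ∀ s, marg K S π s ≠ 0 → ∀ k, (post s : K → ℝ) k * marg K S π s = π (k, s)

/-- The image `ψ_S(π) = Σ_{s ∈ S} π(s)·δ_{p(s)}` of the posterior mapping, as a Borel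
measure on `X = Δ(K)`. -/
noncomputable def ψ (π : K × S → ℝ) (post : S → Δ K) : Measure (Δ K) :=
  ∑ s : S, ENNReal.ofReal (marg K S π s) • Measure.dirac (post s)

end Stmt12

namespace Stmt12

open scoped NNReal Topology

section Extension

variable {E I J : Type*} [SeminormedAddCommGroup E] [NormedSpace ℝ E]

/-- Positively homogeneous `1`-Lipschitz functions on a normed space: the functions of `D1` are
restricted to the simplex from such functions for the ℓ¹ norm. -/
structure IsHomLipschitz (F : E → ℝ) : Prop where
  lipschitz : LipschitzWith 1 F
  map_smul : ∀ a : ℝ, 0 ≤ a → ∀ x, F (a • x) = a * F x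

lemma IsHomLipschitz.mul_sub_mul_le {F : E → ℝ} (hF : IsHomLipschitz F) (x y : E) {a b : ℝ}
    (ha : 0 ≤ a) (hb : 0 ≤ b) : a * F x - b * F y ≤ ‖a • x - b • y‖ := by
  rw [← hF.map_smul a ha, ← hF.map_smul b hb, ← dist_eq_norm, sub_le_iff_le_add']
  simpa only [NNReal.coe_one, one_mul] using hF.lipschitz.le_add_mul (a • x) (b • y)

/-- The largest positively homogeneous `1`-Lipschitz function which is at most `g j` at each
point `q j`: McShane's extension formula, taken over the rays spanned by the points `q j`. The
infimum is meaningful when `-‖q j‖ ≤ g j` for every `j`; otherwise it is not bounded below. -/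
noncomputable def homEnvelope (q : J → E) (g : J → ℝ) (x : E) : ℝ :=
  ⨅ c : J × ℝ≥0, (c.2 * g c.1 + ‖x - (c.2 : ℝ) • q c.1‖)

/-- The constraints of the linear programme dual to the transport of masses at the points `p i`
to masses at the points `q j`. -/
def IsDualPair (p : I → E) (q : J → E) (f : I → ℝ) (g : J → ℝ) : Prop :=
  ∀ i j (a b : ℝ), 0 ≤ a → 0 ≤ b → a * f i - b * g j ≤ ‖a • p i - b • q j‖

variable {q : J → E} {g : J → ℝ}

lemma neg_norm_le_mul_add_norm_sub_smul (hg : ∀ j, -‖q j‖ ≤ g j) (x : E) (c : J × ℝ≥0) :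
    -‖x‖ ≤ c.2 * g c.1 + ‖x - (c.2 : ℝ) • q c.1‖ := by
  have hc : ‖(c.2 : ℝ) • q c.1‖ = c.2 * ‖q c.1‖ := norm_smul_of_nonneg c.2.2 (q c.1)
  have htri : ‖(c.2 : ℝ) • q c.1‖ - ‖x‖ ≤ ‖x - (c.2 : ℝ) • q c.1‖ := by
    rw [norm_sub_rev]
    exact norm_sub_norm_le _ _
  have hmul : c.2 * -‖q c.1‖ ≤ c.2 * g c.1 := mul_le_mul_of_nonneg_left (hg c.1) c.2.2
  linarith

lemma homEnvelope_le (hg : ∀ j, -‖q j‖ ≤ g j) (x : E) (c : J × ℝ≥0) :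
    homEnvelope q g x ≤ c.2 * g c.1 + ‖x - (c.2 : ℝ) • q c.1‖ :=
  ciInf_le ⟨-‖x‖, forall_mem_range.2 (neg_norm_le_mul_add_norm_sub_smul hg x)⟩ c

lemma homEnvelope_apply_le (hg : ∀ j, -‖q j‖ ≤ g j) (j : J) : homEnvelope q g (q j) ≤ g j := by
  simpa using homEnvelope_le hg (q j) (j, 1)

lemma homEnvelope_smul_of_pos {a : ℝ} (ha : 0 < a) (x : E) :
    homEnvelope q g (a • x) = a * homEnvelope q g x := by
  rw [homEnvelope, homEnvelope, Real.mul_iInf_of_nonneg ha.le]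
  symm
  refine ((Equiv.refl J).prodCongr (Equiv.mulLeft₀ (⟨a, ha.le⟩ : ℝ≥0)
    (NNReal.coe_ne_zero.1 ha.ne'))).iInf_congr fun c => ?_
  have hnorm : ‖a • x - (a * c.2) • q c.1‖ = a * ‖x - (c.2 : ℝ) • q c.1‖ := by
    rw [mul_smul, ← smul_sub, norm_smul_of_nonneg ha.le]
  change a * c.2 * g c.1 + ‖a • x - (a * c.2) • q c.1‖ =
    a * (c.2 * g c.1 + ‖x - (c.2 : ℝ) • q c.1‖)
  rw [hnorm, mul_add, mul_assoc]

variable [Nonempty J]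

lemma homEnvelope_zero (hg : ∀ j, -‖q j‖ ≤ g j) : homEnvelope q g 0 = 0 := by
  refine le_antisymm ?_ (le_ciInf fun c => ?_)
  · simpa using homEnvelope_le hg 0 (Classical.arbitrary J, 0)
  · simpa using neg_norm_le_mul_add_norm_sub_smul hg 0 c

lemma isHomLipschitz_homEnvelope (hg : ∀ j, -‖q j‖ ≤ g j) :
    IsHomLipschitz (homEnvelope q g) where
  lipschitz := by
    refine LipschitzWith.of_le_add fun x y => ?_
    rw [← sub_le_iff_le_add]
    refine le_ciInf fun c => ?_
    have hx := homEnvelope_le hg x c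
    have htri := norm_sub_le_norm_sub_add_norm_sub x y ((c.2 : ℝ) • q c.1)
    rw [dist_eq_norm]
    linarith
  map_smul a ha x := by
    rcases ha.eq_or_lt with rfl | ha
    · rw [zero_smul, zero_mul, homEnvelope_zero hg]
    · exact homEnvelope_smul_of_pos ha x

lemma IsDualPair.exists_isHomLipschitz [Nonempty I] {p : I → E} {f : I → ℝ}
    (h : IsDualPair p q f g) :
    ∃ F : E → ℝ, IsHomLipschitz F ∧ (∀ i, f i ≤ F (p i)) ∧ ∀ j, F (q j) ≤ g j := by
  have hg : ∀ j, -‖q j‖ ≤ g j := fun j => by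
    have := h (Classical.arbitrary I) j 0 1 le_rfl zero_le_one
    simp only [zero_mul, one_mul, zero_sub, zero_smul, one_smul, norm_neg] at this
    linarith
  refine ⟨homEnvelope q g, isHomLipschitz_homEnvelope hg, fun i => le_ciInf fun c => ?_,
    homEnvelope_apply_le hg⟩
  have := h i c.1 1 c.2 zero_le_one c.2.2
  rwa [one_mul, one_smul, sub_le_iff_le_add'] at this

end Extension

section Semicoupling

variable {I J : Type*} [Fintype I] [Fintype J]

/-- A semicoupling of the weights `u` and `v`: the mass `α (i, j)` taken from `i` is sent to `j`,
where it arrives as the possibly different mass `β (i, j)`; only the first marginal of `α` and the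
second marginal of `β` are prescribed. -/
structure IsSemicoupling (u : I → ℝ) (v : J → ℝ) (α β : I × J → ℝ) : Prop where
  nonneg_left : 0 ≤ α
  nonneg_right : 0 ≤ β
  sum_left : ∀ i, ∑ j, α (i, j) = u i
  sum_right : ∀ j, ∑ i, β (i, j) = v j

namespace IsSemicoupling

variable {u u' : I → ℝ} {v v' : J → ℝ} {α β α' β' : I × J → ℝ}

lemma zero : IsSemicoupling (0 : I → ℝ) (0 : J → ℝ) 0 0 :=
  ⟨le_rfl, le_rfl, by simp, by simp⟩

lemma add (h : IsSemicoupling u v α β) (h' : IsSemicoupling u' v' α' β') :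
    IsSemicoupling (u + u') (v + v') (α + α') (β + β') where
  nonneg_left := add_nonneg h.nonneg_left h'.nonneg_left
  nonneg_right := add_nonneg h.nonneg_right h'.nonneg_right
  sum_left i := by simp [Finset.sum_add_distrib, h.sum_left, h'.sum_left]
  sum_right j := by simp [Finset.sum_add_distrib, h.sum_right, h'.sum_right]

lemma smul (h : IsSemicoupling u v α β) {t : ℝ} (ht : 0 ≤ t) :
    IsSemicoupling (t • u) (t • v) (t • α) (t • β) where
  nonneg_left := smul_nonneg ht h.nonneg_left
  nonneg_right := smul_nonneg ht h.nonneg_right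
  sum_left i := by simp [← Finset.mul_sum, h.sum_left]
  sum_right j := by simp [← Finset.mul_sum, h.sum_right]

lemma single [DecidableEq I] [DecidableEq J] (i : I) (j : J) {a b : ℝ} (ha : 0 ≤ a)
    (hb : 0 ≤ b) :
    IsSemicoupling (Pi.single i a) (Pi.single j b) (Pi.single (i, j) a) (Pi.single (i, j) b) where
  nonneg_left := by simpa using ha
  nonneg_right := by simpa using hb
  sum_left i' := by by_cases h : i' = i <;> simp [Pi.single_apply, h]
  sum_right j' := by by_cases h : j' = j <;> simp [Pi.single_apply, h]

lemma norm_left_le (h : IsSemicoupling u v α β) : ‖α‖ ≤ ‖u‖ := by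
  refine (pi_norm_le_iff_of_nonneg (norm_nonneg u)).2 fun c => ?_
  rw [Real.norm_of_nonneg (h.nonneg_left c)]
  calc α c ≤ ∑ j, α (c.1, j) := Finset.single_le_sum (f := fun j => α (c.1, j))
        (fun j _ => h.nonneg_left (c.1, j)) (Finset.mem_univ c.2)
    _ = u c.1 := h.sum_left c.1
    _ ≤ ‖u‖ := (Real.le_norm_self _).trans (norm_le_pi_norm u c.1)

lemma norm_right_le (h : IsSemicoupling u v α β) : ‖β‖ ≤ ‖v‖ := by
  refine (pi_norm_le_iff_of_nonneg (norm_nonneg v)).2 fun c => ?_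
  rw [Real.norm_of_nonneg (h.nonneg_right c)]
  calc β c ≤ ∑ i, β (i, c.2) := Finset.single_le_sum (f := fun i => β (i, c.2))
        (fun i _ => h.nonneg_right (i, c.2)) (Finset.mem_univ c.1)
    _ = v c.2 := h.sum_right c.2
    _ ≤ ‖v‖ := (Real.le_norm_self _).trans (norm_le_pi_norm v c.2)

end IsSemicoupling

lemma isClosed_setOf_isSemicoupling :
    IsClosed {e : ((I → ℝ) × (J → ℝ)) × (I × J → ℝ) × (I × J → ℝ) |
      IsSemicoupling e.1.1 e.1.2 e.2.1 e.2.2} := by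
  have heq : {e : ((I → ℝ) × (J → ℝ)) × (I × J → ℝ) × (I × J → ℝ) |
      IsSemicoupling e.1.1 e.1.2 e.2.1 e.2.2} =
      {e | 0 ≤ e.2.1} ∩ ({e | 0 ≤ e.2.2} ∩ ({e | ∀ i, ∑ j, e.2.1 (i, j) = e.1.1 i} ∩
        {e | ∀ j, ∑ i, e.2.2 (i, j) = e.1.2 j})) :=
    Set.ext fun _ => ⟨fun h => ⟨h.1, h.2, h.3, h.4⟩, fun h => ⟨h.1, h.2.1, h.2.2.1, h.2.2.2⟩⟩
  rw [heq]
  refine .inter (isClosed_le (by fun_prop) (by fun_prop)) (.inter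
    (isClosed_le (by fun_prop) (by fun_prop)) (.inter ?_ ?_)) <;>
  · simp only [ofPred_forall]
    exact isClosed_iInter fun _ => isClosed_eq (by fun_prop) (by fun_prop)

variable {E : Type*} [SeminormedAddCommGroup E] [NormedSpace ℝ E] (p : I → E) (q : J → E)

/-- The cost of a semicoupling between masses at the points `p i` and masses at the points `q j`
of a normed space. -/
noncomputable def semicouplingCost (α β : I × J → ℝ) : ℝ :=
  ∑ c, ‖α c • p c.1 - β c • q c.2‖

lemma semicouplingCost_add_le (α β α' β' : I × J → ℝ) :
    semicouplingCost p q (α + α') (β + β') ≤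
      semicouplingCost p q α β + semicouplingCost p q α' β' := by
  rw [semicouplingCost, semicouplingCost, semicouplingCost, ← Finset.sum_add_distrib]
  refine Finset.sum_le_sum fun c _ => ?_
  rw [Pi.add_apply, Pi.add_apply, add_smul, add_smul, add_sub_add_comm]
  exact norm_add_le _ _

lemma semicouplingCost_smul {t : ℝ} (ht : 0 ≤ t) (α β : I × J → ℝ) :
    semicouplingCost p q (t • α) (t • β) = t * semicouplingCost p q α β := by
  simp only [semicouplingCost, Finset.mul_sum, Pi.smul_apply, smul_assoc, ← smul_sub,
    norm_smul_of_nonneg ht]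

lemma semicouplingCost_single [DecidableEq I] [DecidableEq J] (i : I) (j : J) (a b : ℝ) :
    semicouplingCost p q (Pi.single (i, j) a) (Pi.single (i, j) b) = ‖a • p i - b • q j‖ := by
  rw [semicouplingCost, Finset.sum_eq_single_of_mem (i, j) (Finset.mem_univ _)]
  · simp
  · intro c _ hc
    simp [hc]

/-- The pairs of weights on `I` and `J`, together with the upper bounds for the cost of their
semicouplings: the epigraph of the optimal cost. -/
def semicouplingCone : PointedCone ℝ ((I → ℝ) × (J → ℝ) × ℝ) where
  carrier := {e | ∃ α β, IsSemicoupling e.1 e.2.1 α β ∧ semicouplingCost p q α β ≤ e.2.2}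
  zero_mem' := ⟨0, 0, .zero, by simp [semicouplingCost]⟩
  add_mem' := by
    rintro e e' ⟨α, β, h, hc⟩ ⟨α', β', h', hc'⟩
    exact ⟨α + α', β + β', h.add h',
      (semicouplingCost_add_le p q α β α' β').trans (add_le_add hc hc')⟩
  smul_mem' := by
    rintro ⟨t, ht⟩ e ⟨α, β, h, hc⟩
    refine ⟨t • α, t • β, h.smul ht, ?_⟩
    rw [semicouplingCost_smul p q ht]
    exact mul_le_mul_of_nonneg_left hc ht

lemma mem_semicouplingCone {e : (I → ℝ) × (J → ℝ) × ℝ} :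
    e ∈ semicouplingCone p q ↔
      ∃ α β, IsSemicoupling e.1 e.2.1 α β ∧ semicouplingCost p q α β ≤ e.2.2 :=
  Iff.rfl

lemma single_mem_semicouplingCone [DecidableEq I] [DecidableEq J] (i : I) (j : J) {a b : ℝ}
    (ha : 0 ≤ a) (hb : 0 ≤ b) :
    (Pi.single i a, Pi.single j b, ‖a • p i - b • q j‖) ∈ semicouplingCone p q :=
  ⟨_, _, .single i j ha hb, (semicouplingCost_single p q i j a b).le⟩

lemma isClosed_semicouplingCone :
    IsClosed (semicouplingCone p q : Set ((I → ℝ) × (J → ℝ) × ℝ)) := by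
  refine IsSeqClosed.isClosed fun e e₀ he hlim => ?_
  choose α β hαβ hcost using he
  obtain ⟨R, hR⟩ := (Metric.isBounded_range_of_tendsto e hlim).exists_norm_le
  have hbdd : ∀ n, (α n, β n) ∈ Metric.closedBall (0 : (I × J → ℝ) × (I × J → ℝ)) R := fun n => by
    have hn : ‖e n‖ ≤ R := hR _ (mem_range_self n)
    have hu : ‖(e n).1‖ ≤ ‖e n‖ := norm_fst_le (e n)
    have hv : ‖(e n).2.1‖ ≤ ‖e n‖ := (norm_fst_le (e n).2).trans (norm_snd_le (e n))
    rw [mem_closedBall_zero_iff, Prod.norm_mk]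
    exact max_le ((hαβ n).norm_left_le.trans (hu.trans hn))
      ((hαβ n).norm_right_le.trans (hv.trans hn))
  obtain ⟨⟨α₀, β₀⟩, -, φ, hφ, hplan⟩ := tendsto_subseq_of_bounded Metric.isBounded_closedBall hbdd
  have he : Filter.Tendsto (e ∘ φ) Filter.atTop (𝓝 e₀) := hlim.comp hφ.tendsto_atTop
  refine ⟨α₀, β₀, ?_, ?_⟩
  · exact isClosed_setOf_isSemicoupling.mem_of_tendsto
      ((he.fst_nhds.prodMk_nhds he.snd_nhds.fst_nhds).prodMk_nhds hplan)
      (.of_forall fun n => hαβ (φ n))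
  · have hcont : Continuous fun z : (I × J → ℝ) × (I × J → ℝ) => semicouplingCost p q z.1 z.2 := by
      unfold semicouplingCost
      fun_prop
    exact le_of_tendsto_of_tendsto' (hcont.continuousAt.tendsto.comp hplan) he.snd_nhds.snd_nhds
      fun n => hcost (φ n)

lemma exists_linearMap_apply_eq_sum (G : (I → ℝ) × (J → ℝ) × ℝ →ₗ[ℝ] ℝ) :
    ∃ (f : I → ℝ) (g : J → ℝ) (t : ℝ),
      ∀ u v r, G (u, v, r) = ∑ i, u i * f i + ∑ j, v j * g j + r * t := by
  classical
  let A : (I → ℝ) →ₗ[ℝ] ℝ := G ∘ₗ .inl ℝ _ _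
  let B : (J → ℝ) →ₗ[ℝ] ℝ := G ∘ₗ .inr ℝ _ _ ∘ₗ .inl ℝ _ _
  let T : ℝ →ₗ[ℝ] ℝ := G ∘ₗ .inr ℝ _ _ ∘ₗ .inr ℝ _ _
  refine ⟨fun i => A (fun i' => if i = i' then 1 else 0),
    fun j => B (fun j' => if j = j' then 1 else 0), T 1, fun u v r => ?_⟩
  calc G (u, v, r) = A u + B v + T r := by simp [A, B, T, ← map_add]
    _ = ∑ i, u i * A (fun i' => if i = i' then 1 else 0) +
        ∑ j, v j * B (fun j' => if j = j' then 1 else 0) + r * T 1 := by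
      rw [A.pi_apply_eq_sum_univ u, B.pi_apply_eq_sum_univ v, ← smul_eq_mul r, ← map_smul]
      simp only [smul_eq_mul, mul_one]

variable {p q} {u : I → ℝ} {v : J → ℝ} [Nonempty I] [Nonempty J]

theorem exists_isSemicoupling_cost_le_of_isDualPair {d : ℝ} (hu : 0 ≤ u) (hv : 0 ≤ v)
    (h : ∀ f g, IsDualPair p q f g → ∑ i, u i * f i - ∑ j, v j * g j ≤ d) :
    ∃ α β, IsSemicoupling u v α β ∧ semicouplingCost p q α β ≤ d := by
  classical
  rw [← mem_semicouplingCone (e := (u, v, d))]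
  by_contra hmem
  let C : ProperCone ℝ ((I → ℝ) × (J → ℝ) × ℝ) :=
    ⟨semicouplingCone p q, isClosed_semicouplingCone p q⟩
  obtain ⟨G, hG, hG_neg⟩ := C.hyperplane_separation_point hmem
  obtain ⟨f, g, t, hfgt⟩ := exists_linearMap_apply_eq_sum G.toLinearMap
  have hpair : ∀ i j (a b : ℝ), 0 ≤ a → 0 ≤ b →
      0 ≤ a * f i + b * g j + ‖a • p i - b • q j‖ * t := fun i j a b ha hb => by
    simpa [Pi.single_apply] using
      (hG _ (single_mem_semicouplingCone p q i j ha hb)).trans_eq (hfgt _ _ _)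
  have ht : 0 ≤ t := by
    simpa using (hG (0, 0, 1) ⟨0, 0, .zero, by simp [semicouplingCost]⟩).trans_eq (hfgt _ _ _)
  have hneg : ∑ i, u i * f i + ∑ j, v j * g j + d * t < 0 := (hfgt _ _ _).symm.trans_lt hG_neg
  -- `t = 0` means that the hyperplane is vertical, so it cannot be normalized.
  rcases ht.eq_or_lt with rfl | ht
  · have hf : ∀ i, 0 ≤ f i := fun i => by
      simpa using hpair i (Classical.arbitrary J) 1 0 zero_le_one le_rfl
    have hg : ∀ j, 0 ≤ g j := fun j => by
      simpa using hpair (Classical.arbitrary I) j 0 1 le_rfl zero_le_one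
    have hsum_f : 0 ≤ ∑ i, u i * f i := Finset.sum_nonneg fun i _ => mul_nonneg (hu i) (hf i)
    have hsum_g : 0 ≤ ∑ j, v j * g j := Finset.sum_nonneg fun j _ => mul_nonneg (hv j) (hg j)
    linarith
  · have hdual : IsDualPair p q (fun i => -f i / t) (fun j => g j / t) := fun i j a b ha hb => by
      have heq : a * (-f i / t) - b * (g j / t) = -(a * f i + b * g j) / t := by ring
      rw [heq, div_le_iff₀ ht]
      linarith [hpair i j a b ha hb]
    have hle := h _ _ hdual
    simp only [mul_div_assoc', mul_neg, neg_div, Finset.sum_neg_distrib,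
      ← Finset.sum_div] at hle
    rw [← neg_div, ← sub_div, div_le_iff₀ ht] at hle
    linarith

theorem exists_isSemicoupling_cost_le {d : ℝ} (hu : 0 ≤ u) (hv : 0 ≤ v)
    (h : ∀ F, IsHomLipschitz F → ∑ i, u i * F (p i) - ∑ j, v j * F (q j) ≤ d) :
    ∃ α β, IsSemicoupling u v α β ∧ semicouplingCost p q α β ≤ d := by
  refine exists_isSemicoupling_cost_le_of_isDualPair hu hv fun f g hfg => ?_
  obtain ⟨F, hF, hf, hg⟩ := hfg.exists_isHomLipschitz
  calc ∑ i, u i * f i - ∑ j, v j * g j ≤ ∑ i, u i * F (p i) - ∑ j, v j * F (q j) := by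
        gcongr with i _ j _
        exacts [hu i, hf i, hv j, hg j]
    _ ≤ d := h F hF

end Semicoupling

section Simplex

variable {K : Type*} [Fintype K]

/-- The inclusion of the simplex into `K → ℝ` with the ℓ¹ norm (the topology of `Δ K` itself is
that of the sup norm of `K → ℝ`). -/
def toL1 (x : Δ K) : PiLp 1 fun _ : K => ℝ := WithLp.toLp 1 (x : K → ℝ)

lemma continuous_toL1 : Continuous (toL1 (K := K)) :=
  (PiLp.continuous_toLp 1 _).comp continuous_subtype_val

lemma norm_smul_toL1_sub (a b : ℝ) (x y : Δ K) :
    ‖a • toL1 x - b • toL1 y‖ = ∑ k, |a * (x : K → ℝ) k - b * (y : K → ℝ) k| := by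
  simp [PiLp.norm_eq_of_L1, toL1]

lemma norm_toL1 (x : Δ K) : ‖toL1 x‖ = 1 := by
  rw [PiLp.norm_eq_of_L1, ← x.2.2]
  exact Finset.sum_congr rfl fun k _ => Real.norm_of_nonneg (x.2.1 k)

lemma mem_D1_iff {f : C(Δ K, ℝ)} :
    f ∈ D1 K ↔ ∀ x y (a b : ℝ), 0 ≤ a → 0 ≤ b → a * f x - b * f y ≤ ‖a • toL1 x - b • toL1 y‖ := by
  simp only [D1, mem_ofPred_eq, norm_smul_toL1_sub]

lemma IsHomLipschitz.comp_toL1_mem_D1 {F : PiLp 1 (fun _ : K => ℝ) → ℝ} (hF : IsHomLipschitz F) :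
    ⟨F ∘ toL1, hF.lipschitz.continuous.comp continuous_toL1⟩ ∈ D1 K :=
  mem_D1_iff.2 fun x y _ _ ha hb => hF.mul_sub_mul_le (toL1 x) (toL1 y) ha hb

lemma zero_mem_D1 : (0 : C(Δ K, ℝ)) ∈ D1 K :=
  mem_D1_iff.2 fun x y a b _ _ => by simp

lemma abs_le_one_of_mem_D1 {f : C(Δ K, ℝ)} (hf : f ∈ D1 K) (x : Δ K) : |f x| ≤ 1 := by
  rw [mem_D1_iff] at hf
  have hub := hf x x 1 0 zero_le_one le_rfl
  have hlb := hf x x 0 1 le_rfl zero_le_one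
  simp only [one_mul, zero_mul, sub_zero, zero_sub, one_smul, zero_smul, norm_neg,
    norm_toL1] at hub hlb
  exact abs_le.2 ⟨by linarith, hub⟩

lemma abs_pairing_le_one {f : C(Δ K, ℝ)} (hf : f ∈ D1 K) (u : ProbabilityMeasure (Δ K)) :
    |pairing K u f| ≤ 1 := by
  simpa [pairing] using norm_integral_le_of_norm_le_const (μ := (u : Measure (Δ K)))
    (f := f) (.of_forall (abs_le_one_of_mem_D1 hf))

lemma pairing_sub_le_dstar {f : C(Δ K, ℝ)} (hf : f ∈ D1 K) (u v : ProbabilityMeasure (Δ K)) :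
    pairing K u f - pairing K v f ≤ dstar K u v := by
  refine le_csSup ⟨2, forall_mem_image.2 fun f hf => ?_⟩ (mem_image_of_mem _ hf)
  linarith [abs_le.1 (abs_pairing_le_one hf u), abs_le.1 (abs_pairing_le_one hf v)]

lemma dstar_le {u v : ProbabilityMeasure (Δ K)} {r : ℝ}
    (h : ∀ f ∈ D1 K, pairing K u f - pairing K v f ≤ r) : dstar K u v ≤ r :=
  csSup_le ⟨_, mem_image_of_mem _ zero_mem_D1⟩ (forall_mem_image.2 h)

end Simplex

section Mixture

variable {K S T : Type*} [Fintype K] [Fintype S] [Fintype T]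

/-- `μ` is the mixture, with nonnegative weights `w s`, of the Dirac measures at the points `x s`;
the points may repeat. -/
structure IsMixture (μ : ProbabilityMeasure (Δ K)) (w : S → ℝ) (x : S → Δ K) : Prop where
  nonneg : 0 ≤ w
  coe_eq : (μ : Measure (Δ K)) = ∑ s, ENNReal.ofReal (w s) • Measure.dirac (x s)

namespace IsMixture

variable {μ : ProbabilityMeasure (Δ K)} {w : S → ℝ} {x : S → Δ K}

lemma pairing_eq (h : IsMixture μ w x) (f : C(Δ K, ℝ)) : pairing K μ f = ∑ s, w s * f (x s) := by
  rw [pairing, h.coe_eq, integral_finsetSum_measure fun s _ =>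
    (integrable_dirac (by simp)).smul_measure ENNReal.ofReal_ne_top]
  simp [integral_smul_measure, ENNReal.toReal_ofReal (h.nonneg _)]

lemma sum_weights (h : IsMixture μ w x) : ∑ s, w s = 1 := by
  simpa [pairing] using (h.pairing_eq (.const _ 1)).symm

lemma nonempty (h : IsMixture μ w x) : Nonempty S := by
  by_contra hS
  rw [not_nonempty_iff] at hS
  simpa using h.sum_weights

lemma comp_equiv (h : IsMixture μ w x) (e : T ≃ S) : IsMixture μ (w ∘ e) (x ∘ e) where
  nonneg t := h.nonneg (e t)
  coe_eq := h.coe_eq.trans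
    (e.sum_comp fun s => ENNReal.ofReal (w s) • Measure.dirac (x s)).symm

lemma semicoupling_left {w' : T → ℝ} {α β : S × T → ℝ} (h : IsMixture μ w x)
    (hαβ : IsSemicoupling w w' α β) : IsMixture μ α (x ∘ Prod.fst) where
  nonneg := hαβ.nonneg_left
  coe_eq := by
    rw [h.coe_eq, Fintype.sum_prod_type]
    refine Finset.sum_congr rfl fun s _ => ?_
    rw [← hαβ.sum_left, ENNReal.ofReal_sum_of_nonneg fun t _ => hαβ.nonneg_left (s, t),
      Finset.sum_smul]
    rfl

lemma semicoupling_right {w' : T → ℝ} {α β : T × S → ℝ} (h : IsMixture μ w x)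
    (hαβ : IsSemicoupling w' w α β) : IsMixture μ β (x ∘ Prod.snd) where
  nonneg := hαβ.nonneg_right
  coe_eq := by
    rw [h.coe_eq, Fintype.sum_prod_type_right]
    refine Finset.sum_congr rfl fun s _ => ?_
    rw [← hαβ.sum_right, ENNReal.ofReal_sum_of_nonneg fun t _ => hαβ.nonneg_right (t, s),
      Finset.sum_smul]
    rfl

end IsMixture

lemma isMixture_of_finset {μ : ProbabilityMeasure (Δ K)} {U : Finset (Δ K)} {w : Δ K → ℝ}
    (hw : ∀ x ∈ U, 0 ≤ w x)
    (hμ : (μ : Measure (Δ K)) = ∑ x ∈ U, ENNReal.ofReal (w x) • Measure.dirac x) :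
    IsMixture μ (fun x : U => w x) (fun x : U => (x : Δ K)) where
  nonneg x := hw x x.2
  coe_eq := hμ.trans (U.sum_coe_sort fun x => ENNReal.ofReal (w x) • Measure.dirac x).symm

theorem dstar_le_of_isMixture {u v : ProbabilityMeasure (Δ K)} {a b : S → ℝ} {x y : S → Δ K}
    (hu : IsMixture u a x) (hv : IsMixture v b y) :
    dstar K u v ≤ ∑ s, ‖a s • toL1 (x s) - b s • toL1 (y s)‖ := by
  refine dstar_le fun f hf => ?_
  rw [hu.pairing_eq, hv.pairing_eq, ← Finset.sum_sub_distrib]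
  exact Finset.sum_le_sum fun s _ => mem_D1_iff.1 hf _ _ _ _ (hu.nonneg s) (hv.nonneg s)

theorem exists_isMixture_dstar_eq {u v : ProbabilityMeasure (Δ K)} {wu : S → ℝ} {wv : T → ℝ}
    {p : S → Δ K} {q : T → Δ K} (hu : IsMixture u wu p) (hv : IsMixture v wv q) :
    ∃ (a b : S × T → ℝ) (x y : S × T → Δ K), IsMixture u a x ∧ IsMixture v b y ∧
      dstar K u v = ∑ c, ‖a c • toL1 (x c) - b c • toL1 (y c)‖ := by
  have := hu.nonempty
  have := hv.nonempty
  obtain ⟨α, β, hαβ, hcost⟩ : ∃ α β, IsSemicoupling wu wv α β ∧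
      semicouplingCost (toL1 ∘ p) (toL1 ∘ q) α β ≤ dstar K u v := by
    refine exists_isSemicoupling_cost_le hu.nonneg hv.nonneg fun F hF => ?_
    simpa [hu.pairing_eq, hv.pairing_eq] using pairing_sub_le_dstar hF.comp_toL1_mem_D1 u v
  have hα := hu.semicoupling_left hαβ
  have hβ := hv.semicoupling_right hαβ
  exact ⟨α, β, _, _, hα, hβ, (dstar_le_of_isMixture hα hβ).antisymm hcost⟩

end Mixture

section Posterior

variable {K S : Type*} [Fintype K]

/-- The law on `K × S` of a pair `(k, s)` such that `s` has weight `w s` and, given `s`, the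
coordinate `k` has law `x s`. -/
def jointLaw (w : S → ℝ) (x : S → Δ K) (c : K × S) : ℝ := w c.2 * (x c.2 : K → ℝ) c.1

lemma marg_jointLaw (w : S → ℝ) (x : S → Δ K) (s : S) : marg K S (jointLaw w x) s = w s := by
  simp only [marg, jointLaw, ← Finset.mul_sum]
  rw [(x s).2.2, mul_one]

lemma isPosterior_jointLaw (w : S → ℝ) (x : S → Δ K) : IsPosterior K S (jointLaw w x) x :=
  fun s _ k => by rw [marg_jointLaw, mul_comm, jointLaw]

variable [Fintype S]

lemma sum_abs_jointLaw_sub (a b : S → ℝ) (x y : S → Δ K) :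
    ∑ c, |jointLaw a x c - jointLaw b y c| = ∑ s, ‖a s • toL1 (x s) - b s • toL1 (y s)‖ := by
  simp only [Fintype.sum_prod_type_right, jointLaw, norm_smul_toL1_sub]

namespace IsMixture

variable {μ : ProbabilityMeasure (Δ K)} {w : S → ℝ} {x : S → Δ K}

lemma isProbVec_jointLaw (h : IsMixture μ w x) : IsProbVec K S (jointLaw w x) := by
  refine ⟨fun c => mul_nonneg (h.nonneg c.2) ((x c.2).2.1 c.1), ?_⟩
  rw [Fintype.sum_prod_type_right, ← h.sum_weights]
  exact Finset.sum_congr rfl fun s _ => marg_jointLaw w x s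

lemma coe_eq_ψ_jointLaw (h : IsMixture μ w x) :
    (μ : Measure (Δ K)) = ψ K S (jointLaw w x) x := by
  simp only [h.coe_eq, ψ, marg_jointLaw]

end IsMixture

variable {π π' : K × S → ℝ} {post post' : S → Δ K}

lemma IsProbVec.isMixture (hπ : IsProbVec K S π) {μ : ProbabilityMeasure (Δ K)}
    (hμ : (μ : Measure (Δ K)) = ψ K S π post) : IsMixture μ (marg K S π) post :=
  ⟨fun s => Finset.sum_nonneg fun k _ => hπ.1 (k, s), hμ⟩

lemma IsPosterior.jointLaw_eq (hpost : IsPosterior K S π post) (hπ : IsProbVec K S π) :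
    jointLaw (marg K S π) post = π := by
  ext ⟨k, s⟩
  rw [jointLaw]
  by_cases hs : marg K S π s = 0
  · have hk : π (k, s) = 0 :=
      (Finset.sum_eq_zero_iff_of_nonneg fun k _ => hπ.1 (k, s)).1 hs k (Finset.mem_univ k)
    rw [hs, hk, zero_mul]
  · rw [mul_comm, hpost s hs k]

theorem dstar_le_sum_abs_sub (hπ : IsProbVec K S π) (hπ' : IsProbVec K S π')
    (hpost : IsPosterior K S π post) (hpost' : IsPosterior K S π' post')
    {μ μ' : ProbabilityMeasure (Δ K)} (hμ : (μ : Measure (Δ K)) = ψ K S π post)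
    (hμ' : (μ' : Measure (Δ K)) = ψ K S π' post') :
    dstar K μ μ' ≤ ∑ c, |π c - π' c| := by
  rw [← hpost.jointLaw_eq hπ, ← hpost'.jointLaw_eq hπ', sum_abs_jointLaw_sub]
  exact dstar_le_of_isMixture (hπ.isMixture hμ) (hπ'.isMixture hμ')

end Posterior

end Stmt12

/-- **Proposition (Renault–Venel).** For each nonempty finite `S`, the posterior mapping
`ψ_S` is 1-Lipschitz from `(Δ(K×S), ‖·‖₁)` to `(Δ_f(X), d_*)`; moreover `d_*` is the
largest distance with this property: for finitely supported `u, v`,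
`d_*(u,v) = inf { ‖π − π'‖₁ : ψ_S(π) = u, ψ_S(π') = v }`, the infimum being attained. -/
theorem stmt12 (K : Type*) [Fintype K] [Nonempty K] :
    (∀ (S : Type) [Fintype S] [Nonempty S], ∀ π π' : K × S → ℝ,
      Stmt12.IsProbVec K S π → Stmt12.IsProbVec K S π' →
      ∀ post post' : S → Stmt12.Δ K,
      Stmt12.IsPosterior K S π post → Stmt12.IsPosterior K S π' post' →
      ∀ μ μ' : ProbabilityMeasure (Stmt12.Δ K),
      (μ : Measure (Stmt12.Δ K)) = Stmt12.ψ K S π post →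
      (μ' : Measure (Stmt12.Δ K)) = Stmt12.ψ K S π' post' →
      Stmt12.dstar K μ μ' ≤ ∑ x : K × S, |π x - π' x|) ∧
    (∀ u v : ProbabilityMeasure (Stmt12.Δ K),
      ∀ (U V : Finset (Stmt12.Δ K)) (wu wv : Stmt12.Δ K → ℝ),
      (∀ x ∈ U, 0 < wu x) → (∀ y ∈ V, 0 < wv y) →
      (u : Measure (Stmt12.Δ K)) = ∑ x ∈ U, ENNReal.ofReal (wu x) • Measure.dirac x →
      (v : Measure (Stmt12.Δ K)) = ∑ y ∈ V, ENNReal.ofReal (wv y) • Measure.dirac y →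
      IsLeast {r : ℝ | ∃ n : ℕ, 0 < n ∧ ∃ π π' : K × Fin n → ℝ,
          Stmt12.IsProbVec K (Fin n) π ∧ Stmt12.IsProbVec K (Fin n) π' ∧
          ∃ post post' : Fin n → Stmt12.Δ K,
            Stmt12.IsPosterior K (Fin n) π post ∧ Stmt12.IsPosterior K (Fin n) π' post' ∧
            (u : Measure (Stmt12.Δ K)) = Stmt12.ψ K (Fin n) π post ∧
            (v : Measure (Stmt12.Δ K)) = Stmt12.ψ K (Fin n) π' post' ∧
            r = ∑ x : K × Fin n, |π x - π' x|}
        (Stmt12.dstar K u v)) := by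
  refine ⟨fun S _ _ π π' hπ hπ' post post' hpost hpost' μ μ' hμ hμ' =>
    Stmt12.dstar_le_sum_abs_sub hπ hπ' hpost hpost' hμ hμ', ?_⟩
  intro u v U V wu wv hwu hwv hu hv
  constructor
  · obtain ⟨a, b, x, y, hax, hby, hdstar⟩ := Stmt12.exists_isMixture_dstar_eq
      (Stmt12.isMixture_of_finset (fun x hx => (hwu x hx).le) hu)
      (Stmt12.isMixture_of_finset (fun y hy => (hwv y hy).le) hv)
    have := hax.nonempty
    let e := (Fintype.equivFin (U × V)).symm
    have hax' := hax.comp_equiv e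
    have hby' := hby.comp_equiv e
    refine ⟨_, Fintype.card_pos, _, _, hax'.isProbVec_jointLaw, hby'.isProbVec_jointLaw, _, _,
      Stmt12.isPosterior_jointLaw _ _, Stmt12.isPosterior_jointLaw _ _,
      hax'.coe_eq_ψ_jointLaw, hby'.coe_eq_ψ_jointLaw, ?_⟩
    rw [Stmt12.sum_abs_jointLaw_sub, hdstar]
    exact (e.sum_comp _).symm
  · rintro r ⟨n, -, π, π', hπ, hπ', post, post', hpost, hpost', hu, hv, rfl⟩
    exact Stmt12.dstar_le_sum_abs_sub hπ hπ' hpost hpost' hu hv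
end

section
/- For all u, u' ∈ Δ_f(X) and all α ∈ [0,1], the mixed extension satisfies F̂(α·u + (1−α)·u') = α·F̂(u) + (1−α)·F̂(u'), where the right-hand side is the Minkowski combination {α·v + (1−α)·v' : v ∈ F̂(u), v' ∈ F̂(u')}. -/
open Set

namespace Stmt13

/-- `Δ_f(X)`: finitely supported probability measures on `X`, seen as finitely supported
nonnegative weight functions summing to 1. -/
def Δf (X : Type*) : Set (X →₀ ℝ) := {u | (∀ x, 0 ≤ u x) ∧ u.sum (fun _ r => r) = 1}

/-- The mixed extension `F̂(u) = { Σ_x u(x)·f(x) : f(x) ∈ conv F(x) for all x }` of a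
correspondence `F : X ⇉ Δ_f(X)`. -/
def Fhat {X : Type*} (F : X → Set (X →₀ ℝ)) (u : X →₀ ℝ) : Set (X →₀ ℝ) :=
  {w | ∃ f : X → (X →₀ ℝ), (∀ x, f x ∈ convexHull ℝ (F x)) ∧
    w = u.sum (fun x r => r • f x)}

end Stmt13

/-!
A convex set `s` satisfies `(p + q) • s = p • s + q • s` for `p, q ≥ 0`. Hence a selection used
with weights `u` and another used with weights `u'` merge, point by point, into a single selection
used with weights `u + u'`. The mixed extension is therefore additive on nonnegative weights;
homogeneity is linearity in the weights for a fixed selection.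
-/

open Finsupp
open scoped Pointwise

section Semiring

variable {X 𝕜 E : Type*} [Semiring 𝕜] [AddCommMonoid E] [Module 𝕜 E]

/-- The mixed extension of a correspondence `C : X ⇉ E` into an arbitrary module: all linear
combinations, with weights `u`, of selections of `C`. The values of `C` are used as they stand, so
`Stmt13.Fhat F` is the mixed extension of `x ↦ conv F(x)`; the weights need be neither nonnegative
nor normalized. -/
def mixedExtension (C : X → Set E) (u : X →₀ 𝕜) : Set E :=
  (fun f => linearCombination 𝕜 f u) '' univ.pi C

theorem mixedExtension_smul (C : X → Set E) (a : 𝕜) (u : X →₀ 𝕜) :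
    mixedExtension C (a • u) = a • mixedExtension C u := by
  simp only [mixedExtension, map_smul, ← image_smul, image_image]

theorem mixedExtension_add_subset (C : X → Set E) (u u' : X →₀ 𝕜) :
    mixedExtension C (u + u') ⊆ mixedExtension C u + mixedExtension C u' := by
  rintro _ ⟨f, hf, rfl⟩
  exact ⟨_, mem_image_of_mem _ hf, _, mem_image_of_mem _ hf, (map_add _ u u').symm⟩

theorem linearCombination_add_of_add_smul_eq {f f' g : X → E} {u u' : X →₀ 𝕜}
    (h : ∀ x, (u x + u' x) • g x = u x • f x + u' x • f' x) :
    linearCombination 𝕜 g (u + u') = linearCombination 𝕜 f u + linearCombination 𝕜 f' u' := by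
  classical
  have sum_eq (v : X →₀ 𝕜) (k : X → E) (hv : v.support ⊆ u.support ∪ u'.support) :
      linearCombination 𝕜 k v = ∑ x ∈ u.support ∪ u'.support, v x • k x :=
    sum_of_support_subset v hv _ fun x _ => zero_smul 𝕜 (k x)
  rw [sum_eq _ _ support_add, sum_eq _ _ Finset.subset_union_left,
    sum_eq _ _ Finset.subset_union_right, ← Finset.sum_add_distrib]
  exact Finset.sum_congr rfl fun x _ => h x

end Semiring

section OrderedField

variable {X 𝕜 E : Type*} [Field 𝕜] [LinearOrder 𝕜] [IsStrictOrderedRing 𝕜] [AddCommGroup E]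
  [Module 𝕜 E] {C : X → Set E} {u u' : X →₀ 𝕜}

theorem exists_selection_add_smul_eq (hC : ∀ x, Convex 𝕜 (C x)) {p q : X → 𝕜} (hp : 0 ≤ p)
    (hq : 0 ≤ q) {f f' : X → E} (hf : f ∈ univ.pi C) (hf' : f' ∈ univ.pi C) :
    ∃ g ∈ univ.pi C, ∀ x, (p x + q x) • g x = p x • f x + q x • f' x := by
  choose g hgC hg using fun x =>
    (hC x).exists_mem_add_smul_eq (hf x trivial) (hf' x trivial) (hp x) (hq x)
  exact ⟨g, fun x _ => hgC x, hg⟩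

theorem mixedExtension_add (hC : ∀ x, Convex 𝕜 (C x)) (hu : 0 ≤ u) (hu' : 0 ≤ u') :
    mixedExtension C (u + u') = mixedExtension C u + mixedExtension C u' := by
  refine (mixedExtension_add_subset C u u').antisymm ?_
  rintro _ ⟨_, ⟨f, hf, rfl⟩, _, ⟨f', hf', rfl⟩, rfl⟩
  obtain ⟨g, hgC, hg⟩ := exists_selection_add_smul_eq hC (p := u) (q := u') hu hu' hf hf'
  exact ⟨g, hgC, linearCombination_add_of_add_smul_eq hg⟩

theorem stmt13_general (hC : ∀ x, Convex 𝕜 (C x)) (hu : 0 ≤ u) (hu' : 0 ≤ u') {a b : 𝕜}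
    (ha : 0 ≤ a) (hb : 0 ≤ b) :
    mixedExtension C (a • u + b • u') = a • mixedExtension C u + b • mixedExtension C u' := by
  rw [mixedExtension_add hC (smul_nonneg ha hu) (smul_nonneg hb hu'), mixedExtension_smul,
    mixedExtension_smul]

end OrderedField

theorem Stmt13.Fhat_eq_mixedExtension {X : Type*} (F : X → Set (X →₀ ℝ)) (u : X →₀ ℝ) :
    Stmt13.Fhat F u = mixedExtension (fun x => convexHull ℝ (F x)) u := by
  ext w
  simp only [Stmt13.Fhat, mixedExtension, mem_ofPred_eq, mem_image, mem_univ_pi,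
    linearCombination_apply, eq_comm (a := w)]

theorem smul_add_smul_eq_setOf {𝕜 E : Type*} [SMul 𝕜 E] [Add E] (a b : 𝕜) (s t : Set E) :
    a • s + b • t = {w | ∃ v ∈ s, ∃ v' ∈ t, w = a • v + b • v'} := by
  ext w
  simp only [mem_add, mem_smul_set, exists_exists_and_eq_and, mem_ofPred_eq, eq_comm (a := w)]

/-- **Lemma (Renault–Venel).** For all `u, u' ∈ Δ_f(X)` and `α ∈ [0,1]`,
`F̂(α·u + (1−α)·u') = α·F̂(u) + (1−α)·F̂(u')` (Minkowski combination). -/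
theorem stmt13 (X : Type*) (F : X → Set (X →₀ ℝ))
    (hFne : ∀ x, (F x).Nonempty) (hFΔ : ∀ x, F x ⊆ Stmt13.Δf X)
    (u u' : X →₀ ℝ) (hu : u ∈ Stmt13.Δf X) (hu' : u' ∈ Stmt13.Δf X)
    (α : ℝ) (hα : α ∈ Icc (0:ℝ) 1) :
    Stmt13.Fhat F (α • u + (1 - α) • u') =
      {w | ∃ v ∈ Stmt13.Fhat F u, ∃ v' ∈ Stmt13.Fhat F u',
        w = α • v + (1 - α) • v'} := by
  simpa only [Stmt13.Fhat_eq_mixedExtension, smul_add_smul_eq_setOf] using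
    stmt13_general (fun x => convex_convexHull ℝ (F x)) hu.1 hu'.1 hα.1 (sub_nonneg.2 hα.2)
end

section
/- Let F : X → P(Δ_f(X)) have nonempty values and be non-expansive for the Kantorovich-Rubinstein distance, i.e. for all x, x' ∈ X and all u ∈ F(x) there exists u' ∈ F(x') with d_KR(u,u') ≤ d(x,x'). Then the mixed extension F̂ is 1-Lipschitz from (Δ_f(X), d_KR) to itself: for all u₁, u₂ ∈ Δ_f(X) and every v₁ ∈ F̂(u₁), there exists v₂ ∈ F̂(u₂) with d_KR(v₁,v₂) ≤ d_KR(u₁,u₂). -/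
open Set

namespace Stmt14

/-- `Δ_f(X)`: finitely supported probability measures on `X`, seen as finitely supported
nonnegative weight functions summing to 1. -/
def Δf (X : Type*) : Set (X →₀ ℝ) := {u | (∀ x, 0 ≤ u x) ∧ u.sum (fun _ r => r) = 1}

/-- The mixed extension `F̂(u) = { Σ_x u(x)·f(x) : f(x) ∈ conv F(x) for all x }` of a
correspondence `F : X ⇉ Δ_f(X)`. -/
def Fhat {X : Type*} (F : X → Set (X →₀ ℝ)) (u : X →₀ ℝ) : Set (X →₀ ℝ) :=
  {w | ∃ f : X → (X →₀ ℝ), (∀ x, f x ∈ convexHull ℝ (F x)) ∧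
    w = u.sum (fun x r => r • f x)}

/-- The Kantorovich–Rubinstein distance
`d_KR(u,v) = sup { u(f) − v(f) : f 1-Lipschitz }` on `Δ_f(X)`. -/
noncomputable def dKR {X : Type*} [MetricSpace X] (u v : X →₀ ℝ) : ℝ :=
  sSup {r : ℝ | ∃ f : X → ℝ, LipschitzWith 1 f ∧
    r = u.sum (fun x a => a * f x) - v.sum (fun x a => a * f x)}

end Stmt14

/-!
A coupling of `u₁` and `u₂` writes them as mixtures of Dirac masses `δ_x`, `δ_y` with common
weights `γ(x, y)`, and by Kantorovich–Rubinstein duality some coupling has cost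
`Σ γ(x, y) d(x, y)` at most `d_KR(u₁, u₂)`. Since `d_KR` is jointly convex, non-expansiveness of `F`
passes to `x ↦ conv F(x)`, so each `f(x) ∈ conv F(x)` has a partner `g(x, y) ∈ conv F(y)` at
distance at most `d(x, y)`. Averaging the `g(x, y)` against `γ` gives an element of `F̂(u₂)`, and by
joint convexity again its distance to `Σ u₁(x) f(x)` is at most the cost of `γ`.

Duality is a Hahn–Banach separation of `(u₁, u₂, C)` from the convex hull of the points
`(δ_x, δ_y, d(x, y))`, where `x` and `y` range over the finite supports of `u₁` and `u₂`.
-/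

namespace Stmt14

open Finsupp

section LinearCombination

variable {α R M : Type*} [Semiring R] [AddCommMonoid M] [Module R M]

lemma linearCombination_add_fun (f g : α → M) (u : α →₀ R) :
    linearCombination R (fun x => f x + g x) u =
      linearCombination R f u + linearCombination R g u := by
  simp only [linearCombination_apply, smul_add, sum_add]

lemma linearMap_apply_eq_linearCombination (g : (α →₀ R) →ₗ[R] M) (u : α →₀ R) :
    g u = linearCombination R (fun x => g (single x 1)) u := by
  refine LinearMap.congr_fun (lhom_ext' fun x => LinearMap.ext_ring ?_) u
  simp

lemma map_mem_support_mapDomain {ι N : Type*} [AddCommMonoid N] [PartialOrder N]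
    [IsOrderedAddMonoid N] {γ : ι →₀ N} (hγ : ∀ i, 0 ≤ γ i) (π : ι → α) {i : ι}
    (hi : i ∈ γ.support) : π i ∈ (γ.mapDomain π).support := by
  classical
  have hle : γ i ≤ γ.mapDomain π (π i) := by
    rw [mapDomain_apply_eq_sum]
    exact Finset.single_le_sum (fun j _ => hγ j) (Finset.mem_filter.2 ⟨hi, rfl⟩)
  exact mem_support_iff.2 (((hγ i).lt_of_ne' (mem_support_iff.1 hi)).trans_le hle).ne'

end LinearCombination

section Convexity

lemma exists_mem_sum_smul_eq {ι 𝕜 E : Type*} [Field 𝕜] [LinearOrder 𝕜] [IsStrictOrderedRing 𝕜]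
    [AddCommGroup E] [Module 𝕜 E] {K : Set E} (hK : Convex 𝕜 K) (hne : K.Nonempty) {s : Finset ι}
    {w : ι → 𝕜} (hw : ∀ i ∈ s, 0 ≤ w i) {g : ι → E} (hg : ∀ i ∈ s, g i ∈ K) :
    ∃ b ∈ K, (∑ i ∈ s, w i) • b = ∑ i ∈ s, w i • g i := by
  rcases (Finset.sum_nonneg hw).eq_or_lt' with hzero | hpos
  · obtain ⟨b, hb⟩ := hne
    have hwi := (Finset.sum_eq_zero_iff_of_nonneg hw).1 hzero
    refine ⟨b, hb, ?_⟩
    rw [hzero, zero_smul, Finset.sum_eq_zero fun i hi => by rw [hwi i hi, zero_smul]]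
  · exact ⟨s.centerMass w g, hK.centerMass_mem hw hpos hg, smul_inv_smul₀ hpos.ne' _⟩

lemma exists_mem_convexHull_of_convex_rel {𝕜 E E' : Type*} [Semiring 𝕜] [PartialOrder 𝕜]
    [AddCommMonoid E] [Module 𝕜 E] [AddCommMonoid E'] [Module 𝕜 E'] {R : Set (E × E')}
    (hR : Convex 𝕜 R) {S : Set E} {T : Set E'} (hST : ∀ a ∈ S, ∃ b ∈ T, (a, b) ∈ R) {a : E}
    (ha : a ∈ convexHull 𝕜 S) :
    ∃ b ∈ convexHull 𝕜 T, (a, b) ∈ R := by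
  have hconv : Convex 𝕜 (Prod.fst '' (R ∩ univ ×ˢ convexHull 𝕜 T)) :=
    (hR.inter (convex_univ.prod (convex_convexHull 𝕜 T))).linear_image (LinearMap.fst 𝕜 E E')
  have hsub : S ⊆ Prod.fst '' (R ∩ univ ×ˢ convexHull 𝕜 T) := fun a ha =>
    let ⟨b, hb, hab⟩ := hST a ha
    ⟨(a, b), ⟨hab, mem_univ a, subset_convexHull 𝕜 T hb⟩, rfl⟩
  obtain ⟨⟨a, b⟩, ⟨hab, -, hb⟩, rfl⟩ := convexHull_min hsub hconv ha
  exact ⟨b, hb, hab⟩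

end Convexity

section Weights

variable {α E : Type*} [AddCommGroup E] [Module ℝ E]

lemma single_mem_Δf (x : α) : single x 1 ∈ Δf α := by
  classical
  exact ⟨fun y => by rw [single_apply]; split_ifs <;> norm_num, sum_single_index rfl⟩

lemma linearCombination_const_of_mem_Δf {u : α →₀ ℝ} (hu : u ∈ Δf α) (c : E) :
    linearCombination ℝ (fun _ => c) u = c := by
  rw [linearCombination_apply, Finsupp.sum, ← Finset.sum_smul]
  exact (congrArg (· • c) hu.2).trans (one_smul ℝ c)

lemma mem_Δf_iff {u : α →₀ ℝ} :
    u ∈ Δf α ↔ (∀ x, 0 ≤ u x) ∧ linearCombination ℝ (fun _ => (1 : ℝ)) u = 1 := by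
  simp only [Δf, mem_ofPred_eq, linearCombination_apply, smul_eq_mul, mul_one]

lemma convex_Δf : Convex ℝ (Δf α) := by
  intro u hu v hv s t hs ht hst
  rw [mem_Δf_iff] at hu hv ⊢
  refine ⟨fun x => ?_, ?_⟩
  · exact add_nonneg (mul_nonneg hs (hu.1 x)) (mul_nonneg ht (hv.1 x))
  · simp only [map_add, map_smul, hu.2, hv.2, smul_eq_mul, mul_one, hst]

lemma convexHull_single_subset_Δf (s : Set α) :
    convexHull ℝ ((fun x => single x (1 : ℝ)) '' s) ⊆ Δf α :=
  convexHull_min (image_subset_iff.2 fun x _ => single_mem_Δf x) convex_Δf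

lemma linearCombination_mem_of_convex {u : α →₀ ℝ} (hu : u ∈ Δf α) {K : Set E}
    (hK : Convex ℝ K) {f : α → E} (hf : ∀ x ∈ u.support, f x ∈ K) :
    linearCombination ℝ f u ∈ K :=
  hK.sum_mem (fun x _ => hu.1 x) hu.2 hf

lemma linearCombination_mono {u : α →₀ ℝ} (hu : ∀ x, 0 ≤ u x) {f g : α → ℝ}
    (hfg : ∀ x ∈ u.support, f x ≤ g x) : linearCombination ℝ f u ≤ linearCombination ℝ g u :=
  Finset.sum_le_sum fun x hx => mul_le_mul_of_nonneg_left (hfg x hx) (hu x)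

lemma linearCombination_mul_add_const {u : α →₀ ℝ} (hu : u ∈ Δf α) (f : α → ℝ) (a b : ℝ) :
    linearCombination ℝ (fun x => a * f x + b) u = a * linearCombination ℝ f u + b := by
  conv_rhs => rw [← linearCombination_const_of_mem_Δf hu b]
  simp only [linearCombination_apply, smul_eq_mul, mul_add, sum_add, mul_sum, mul_left_comm a]

end Weights

section Coupling

variable {α β : Type*} {u : α →₀ ℝ} {v : β →₀ ℝ} {γ : α × β →₀ ℝ}

/-- `γ` is a coupling (transport plan) of `u` and `v`: a finitely supported probability measure on
the product with marginals `u` and `v`. -/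
structure IsCoupling (u : α →₀ ℝ) (v : β →₀ ℝ) (γ : α × β →₀ ℝ) : Prop where
  mem_Δf : γ ∈ Δf (α × β)
  map_fst : γ.mapDomain Prod.fst = u
  map_snd : γ.mapDomain Prod.snd = v

lemma IsCoupling.linearCombination_fst {E : Type*} [AddCommGroup E] [Module ℝ E]
    (hγ : IsCoupling u v γ) (f : α → E) :
    linearCombination ℝ (fun z => f z.1) γ = linearCombination ℝ f u := by
  rw [← hγ.map_fst, linearCombination_mapDomain]
  rfl

lemma IsCoupling.linearCombination_snd {E : Type*} [AddCommGroup E] [Module ℝ E]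
    (hγ : IsCoupling u v γ) (f : β → E) :
    linearCombination ℝ (fun z => f z.2) γ = linearCombination ℝ f v := by
  rw [← hγ.map_snd, linearCombination_mapDomain]
  rfl

lemma IsCoupling.fst_mem_support (hγ : IsCoupling u v γ) {z : α × β} (hz : z ∈ γ.support) :
    z.1 ∈ u.support :=
  hγ.map_fst ▸ map_mem_support_mapDomain hγ.mem_Δf.1 Prod.fst hz

lemma IsCoupling.snd_mem_support (hγ : IsCoupling u v γ) {z : α × β} (hz : z ∈ γ.support) :
    z.2 ∈ v.support :=
  hγ.map_snd ▸ map_mem_support_mapDomain hγ.mem_Δf.1 Prod.snd hz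

/-- The product measure `u ⊗ v`, as the mixture `Σ u(x) v(y) δ_(x, y)`; it is the trivial coupling
of two probability measures. -/
noncomputable def prodCoupling (u : α →₀ ℝ) (v : β →₀ ℝ) : α × β →₀ ℝ :=
  linearCombination ℝ (fun x => linearCombination ℝ (fun y => single (x, y) 1) v) u

lemma isCoupling_prodCoupling (hu : u ∈ Δf α) (hv : v ∈ Δf β) :
    IsCoupling u v (prodCoupling u v) where
  mem_Δf :=
    linearCombination_mem_of_convex hu convex_Δf fun x _ =>
      linearCombination_mem_of_convex hv convex_Δf fun y _ => single_mem_Δf (x, y)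
  map_fst := by
    change lmapDomain ℝ ℝ Prod.fst _ = u
    simp only [prodCoupling, apply_linearCombination, Function.comp_def, lmapDomain_apply,
      mapDomain_single, linearCombination_const_of_mem_Δf hv]
    exact (linearMap_apply_eq_linearCombination LinearMap.id u).symm
  map_snd := by
    change lmapDomain ℝ ℝ Prod.snd _ = v
    simp only [prodCoupling, apply_linearCombination, Function.comp_def, lmapDomain_apply,
      mapDomain_single, linearCombination_const_of_mem_Δf hu]
    exact (linearMap_apply_eq_linearCombination LinearMap.id v).symm

lemma exists_potentials_of_linearMap {R : Type*} [CommSemiring R]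
    (f : (α → R) × (β → R) × R →ₗ[R] R) :
    ∃ (φ : α → R) (ψ : β → R) (k : R), ∀ (u : α →₀ R) (v : β →₀ R) (t : R),
      f (⇑u, ⇑v, t) = linearCombination R φ u + linearCombination R ψ v + k * t := by
  refine ⟨fun x => f (⇑(single x (1 : R)), 0, 0), fun y => f (0, ⇑(single y (1 : R)), 0),
    f (0, 0, 1), fun u v t => ?_⟩
  have hu := linearMap_apply_eq_linearCombination (f ∘ₗ LinearMap.inl R _ _ ∘ₗ lcoeFun) u
  have hv := linearMap_apply_eq_linearCombination
    (f ∘ₗ LinearMap.inr R _ _ ∘ₗ LinearMap.inl R _ _ ∘ₗ lcoeFun) v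
  have ht : f (0, 0, t) = f (0, 0, 1) * t := by
    rw [mul_comm, ← smul_eq_mul, ← map_smul]
    simp
  have hsplit : (⇑u, ⇑v, t) = (⇑u, 0, 0) + (0, ⇑v, 0) + ((0, 0, t) : (α → R) × (β → R) × R) := by
    simp
  rw [hsplit, map_add, map_add, ht]
  exact congrArg (· + _) (congrArg₂ (· + ·) hu hv)

lemma exists_separating_potentials (u : α →₀ ℝ) (v : β →₀ ℝ) (c : α × β → ℝ) (C : ℝ)
    (hC : ∀ γ, IsCoupling u v γ → linearCombination ℝ c γ ≠ C) :
    ∃ (φ : α → ℝ) (ψ : β → ℝ) (k r : ℝ),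
      (∀ x ∈ u.support, ∀ y ∈ v.support, φ x + ψ y < k * c (x, y) + r) ∧
      k * C + r < linearCombination ℝ φ u + linearCombination ℝ ψ v := by
  let L : (α × β →₀ ℝ) →ₗ[ℝ] (α → ℝ) × (β → ℝ) × ℝ :=
    (lcoeFun ∘ₗ lmapDomain ℝ ℝ Prod.fst).prod
      ((lcoeFun ∘ₗ lmapDomain ℝ ℝ Prod.snd).prod (linearCombination ℝ c))
  let D : Set (α × β →₀ ℝ) :=
    (fun z => single z 1) '' ((u.support : Set α) ×ˢ (v.support : Set β))
  have hclosed : IsClosed (convexHull ℝ (L '' D)) :=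
    (((u.support.finite_toSet.prod v.support.finite_toSet).image _).image _).isClosed_convexHull ℝ
  have hnotMem : (⇑u, ⇑v, C) ∉ convexHull ℝ (L '' D) := by
    rw [← L.image_convexHull]
    rintro ⟨γ, hγ, hL⟩
    obtain ⟨hfst, hsnd, hcost⟩ : _ ∧ _ ∧ _ := by simpa only [Prod.ext_iff] using hL
    exact hC γ ⟨convexHull_single_subset_Δf _ hγ, DFunLike.coe_injective hfst,
      DFunLike.coe_injective hsnd⟩ hcost
  obtain ⟨f, r, hlt, hgt⟩ :=
    geometric_hahn_banach_closed_point (convex_convexHull ℝ _) hclosed hnotMem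
  obtain ⟨φ, ψ, k, hf⟩ := exists_potentials_of_linearMap f.toLinearMap
  refine ⟨φ, ψ, -k, r, fun x hx y hy => ?_, by linarith [hgt.trans_eq (hf u v C)]⟩
  have hL : L (single (x, y) 1) = (⇑(single x (1 : ℝ)), ⇑(single y (1 : ℝ)), c (x, y)) := by
    simp [L]
  have hD : single (x, y) 1 ∈ D := mem_image_of_mem _ (mk_mem_prod hx hy)
  have hxy := hlt _ (subset_convexHull ℝ _ (mem_image_of_mem L hD))
  have hfxy := hf (single x 1) (single y 1) (c (x, y))
  simp only [linearCombination_single, one_smul] at hfxy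
  rw [hL] at hxy
  linarith [hfxy.symm.trans_lt hxy]

theorem exists_isCoupling_linearCombination_le (hu : u ∈ Δf α) (hv : v ∈ Δf β) (c : α × β → ℝ)
    (C : ℝ)
    (hdual : ∀ (φ : α → ℝ) (ψ : β → ℝ),
      (∀ x ∈ u.support, ∀ y ∈ v.support, φ x + ψ y ≤ c (x, y)) →
        linearCombination ℝ φ u + linearCombination ℝ ψ v ≤ C) :
    ∃ γ, IsCoupling u v γ ∧ linearCombination ℝ c γ ≤ C := by
  by_contra! hlt
  obtain ⟨φ, ψ, k, r, hφψ, hr⟩ :=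
    exists_separating_potentials u v c C fun γ hγ => (hlt γ hγ).ne'
  have hprod := isCoupling_prodCoupling hu hv
  -- The product coupling costs more than `C` but lies below the separating hyperplane.
  have hk : 0 < k := by
    have hle := linearCombination_mono hprod.mem_Δf.1 fun z hz =>
      (hφψ z.1 (hprod.fst_mem_support hz) z.2 (hprod.snd_mem_support hz)).le
    rw [linearCombination_add_fun, hprod.linearCombination_fst, hprod.linearCombination_snd,
      linearCombination_mul_add_const hprod.mem_Δf] at hle
    have hpos : 0 < k * (linearCombination ℝ c (prodCoupling u v) - C) := by linarith
    exact (pos_iff_pos_of_mul_pos hpos).2 (sub_pos.2 (hlt _ hprod))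
  have hle := hdual (fun x => k⁻¹ * φ x + k⁻¹ * -r) (fun y => k⁻¹ * ψ y + 0) fun x hx y hy => by
    field_simp
    linarith [hφψ x hx y hy]
  rw [linearCombination_mul_add_const hu, linearCombination_mul_add_const hv] at hle
  field_simp at hle
  linarith

end Coupling

section CTransform

variable {X : Type*} [PseudoMetricSpace X] {s : Finset X} (hs : s.Nonempty) (ψ : X → ℝ)

/-- The `c`-transform `x ↦ min_{y ∈ s} (d(x, y) - ψ y)` of a potential `ψ` given on a finite set
`s`, for the cost `d`: the largest `φ` such that `φ x + ψ y ≤ d(x, y)` for `y ∈ s`. -/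
noncomputable def cTransform (x : X) : ℝ :=
  s.inf' hs fun y => dist x y - ψ y

lemma lipschitzWith_cTransform : LipschitzWith 1 (cTransform hs ψ) := by
  refine LipschitzWith.of_le_add fun x y => ?_
  obtain ⟨z, hz, hyz⟩ := s.exists_mem_eq_inf' hs fun z => dist y z - ψ z
  rw [cTransform, cTransform, hyz]
  exact (Finset.inf'_le _ hz).trans (by linarith [dist_triangle x y z])

lemma cTransform_add_le_dist (x : X) {y : X} (hy : y ∈ s) :
    cTransform hs ψ x + ψ y ≤ dist x y :=
  le_sub_iff_add_le.1 (Finset.inf'_le _ hy)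

lemma le_cTransform {x : X} {a : ℝ} (ha : ∀ y ∈ s, a + ψ y ≤ dist x y) : a ≤ cTransform hs ψ x :=
  Finset.le_inf' _ _ fun y hy => le_sub_iff_add_le.2 (ha y hy)

end CTransform

section KantorovichRubinstein

variable {X : Type*} [MetricSpace X] {u v : X →₀ ℝ}

lemma IsCoupling.linearCombination_sub_le {γ : X × X →₀ ℝ} (hγ : IsCoupling u v γ) {f : X → ℝ}
    (hf : LipschitzWith 1 f) :
    linearCombination ℝ f u - linearCombination ℝ f v ≤
      linearCombination ℝ (fun z => dist z.1 z.2) γ := by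
  rw [← hγ.linearCombination_fst, ← hγ.linearCombination_snd, sub_le_iff_le_add',
    ← linearCombination_add_fun]
  exact linearCombination_mono hγ.mem_Δf.1 fun z _ => by simpa using hf.le_add_mul z.1 z.2

lemma linearCombination_sub_le_dKR (hu : u ∈ Δf X) (hv : v ∈ Δf X) {f : X → ℝ}
    (hf : LipschitzWith 1 f) :
    linearCombination ℝ f u - linearCombination ℝ f v ≤ dKR u v := by
  refine le_csSup ⟨linearCombination ℝ (fun z => dist z.1 z.2) (prodCoupling u v), ?_⟩ ⟨f, hf, rfl⟩
  rintro _ ⟨g, hg, rfl⟩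
  exact (isCoupling_prodCoupling hu hv).linearCombination_sub_le hg

lemma dKR_le {B : ℝ} (h : ∀ f : X → ℝ, LipschitzWith 1 f →
    linearCombination ℝ f u - linearCombination ℝ f v ≤ B) : dKR u v ≤ B := by
  refine csSup_le ⟨_, fun _ => 0, LipschitzWith.const' 0, rfl⟩ ?_
  rintro _ ⟨f, hf, rfl⟩
  exact h f hf

lemma convexOn_dKR : ConvexOn ℝ (Δf X ×ˢ Δf X) fun p => dKR p.1 p.2 := by
  refine ⟨convex_Δf.prod convex_Δf, ?_⟩
  rintro ⟨u, v⟩ ⟨hu, hv⟩ ⟨u', v'⟩ ⟨hu', hv'⟩ s t hs ht -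
  refine dKR_le fun f hf => ?_
  have h := mul_le_mul_of_nonneg_left (linearCombination_sub_le_dKR hu hv hf) hs
  have h' := mul_le_mul_of_nonneg_left (linearCombination_sub_le_dKR hu' hv' hf) ht
  simp only [Prod.smul_mk, Prod.mk_add_mk, map_add, map_smul, smul_eq_mul]
  linarith

theorem exists_isCoupling_dist_le_dKR (hu : u ∈ Δf X) (hv : v ∈ Δf X) :
    ∃ γ, IsCoupling u v γ ∧ linearCombination ℝ (fun z => dist z.1 z.2) γ ≤ dKR u v := by
  have hne : v.support.Nonempty := by
    rw [support_nonempty_iff]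
    rintro rfl
    simpa using hv.2
  refine exists_isCoupling_linearCombination_le hu hv _ _ fun φ ψ hφψ => ?_
  set g := cTransform hne ψ
  have hφ : linearCombination ℝ φ u ≤ linearCombination ℝ g u :=
    linearCombination_mono hu.1 fun x hx => le_cTransform hne ψ (hφψ x hx)
  have hψ : linearCombination ℝ g v + linearCombination ℝ ψ v ≤ 0 := by
    rw [← linearCombination_add_fun, ← linearCombination_const_of_mem_Δf hv (0 : ℝ)]
    exact linearCombination_mono hv.1 fun y hy =>
      (cTransform_add_le_dist hne ψ y hy).trans_eq (dist_self y)
  linarith [linearCombination_sub_le_dKR hu hv (lipschitzWith_cTransform hne ψ)]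

lemma dKR_linearCombination_le {ι : Type*} {γ : ι →₀ ℝ} (hγ : ∀ i, 0 ≤ γ i) {a b : ι → X →₀ ℝ}
    (ha : ∀ i, a i ∈ Δf X) (hb : ∀ i, b i ∈ Δf X) :
    dKR (linearCombination ℝ a γ) (linearCombination ℝ b γ) ≤
      linearCombination ℝ (fun i => dKR (a i) (b i)) γ := by
  refine dKR_le fun f hf => ?_
  rw [apply_linearCombination, apply_linearCombination, sub_le_iff_le_add',
    ← linearCombination_add_fun]
  exact linearCombination_mono hγ fun i _ =>
    sub_le_iff_le_add'.1 (linearCombination_sub_le_dKR (ha i) (hb i) hf)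

end KantorovichRubinstein

section MixedExtension

variable {X : Type*}

lemma linearCombination_mem_Fhat {ι : Type*} {F : X → Set (X →₀ ℝ)} (hF : ∀ x, (F x).Nonempty)
    {γ : ι →₀ ℝ} (hγ : ∀ i, 0 ≤ γ i) (π : ι → X) {g : ι → X →₀ ℝ}
    (hg : ∀ i, g i ∈ convexHull ℝ (F (π i))) :
    linearCombination ℝ g γ ∈ Fhat F (γ.mapDomain π) := by
  classical
  choose f hf hfg using fun x => exists_mem_sum_smul_eq (convex_convexHull ℝ (F x))
    (convexHull_nonempty_iff.2 (hF x)) (s := γ.support.filter (π · = x)) (fun i _ => hγ i)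
    fun i hi => (Finset.mem_filter.1 hi).2 ▸ hg i
  have hmaps : ∀ i ∈ γ.support, π i ∈ γ.support.image π := fun i => Finset.mem_image_of_mem π
  refine ⟨f, hf, ?_⟩
  calc linearCombination ℝ g γ
      = ∑ x ∈ γ.support.image π, ∑ i ∈ γ.support with π i = x, γ i • g i :=
        (Finset.sum_fiberwise_of_maps_to hmaps _).symm
    _ = ∑ x ∈ γ.support.image π, ∑ i ∈ γ.support with π i = x, γ i • f x := by
        simp only [← hfg, Finset.sum_smul]
    _ = ∑ x ∈ γ.support.image π, ∑ i ∈ γ.support with π i = x, γ i • f (π i) :=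
        Finset.sum_congr rfl fun x _ => Finset.sum_congr rfl fun i hi => by
          rw [(Finset.mem_filter.1 hi).2]
    _ = linearCombination ℝ (f ∘ π) γ := Finset.sum_fiberwise_of_maps_to hmaps _
    _ = linearCombination ℝ f (γ.mapDomain π) := (linearCombination_mapDomain ℝ π γ).symm

lemma exists_mem_convexHull_dKR_le [MetricSpace X] {S T : Set (X →₀ ℝ)} {r : ℝ}
    (hS : S ⊆ Δf X) (hT : T ⊆ Δf X) (hST : ∀ a ∈ S, ∃ b ∈ T, dKR a b ≤ r) {a : X →₀ ℝ}
    (ha : a ∈ convexHull ℝ S) : ∃ b ∈ convexHull ℝ T, dKR a b ≤ r := by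
  obtain ⟨b, hb, -, hab⟩ := exists_mem_convexHull_of_convex_rel (convexOn_dKR.convex_le r)
    (fun a ha => let ⟨b, hb, hab⟩ := hST a ha; ⟨b, hb, ⟨hS ha, hT hb⟩, hab⟩) ha
  exact ⟨b, hb, hab⟩

end MixedExtension

end Stmt14

open Stmt14 Finsupp in
theorem stmt14_general {X : Type*} [MetricSpace X] {F : X → Set (X →₀ ℝ)}
    (hFΔ : ∀ x, F x ⊆ Δf X)
    (hexp : ∀ x x' : X, ∀ u ∈ F x, ∃ u' ∈ F x', dKR u u' ≤ dist x x')
    {u₁ u₂ : X →₀ ℝ} (hu₁ : u₁ ∈ Δf X) (hu₂ : u₂ ∈ Δf X)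
    {v₁ : X →₀ ℝ} (hv₁ : v₁ ∈ Fhat F u₁) :
    ∃ v₂ ∈ Fhat F u₂, dKR v₁ v₂ ≤ dKR u₁ u₂ := by
  obtain ⟨f, hf, rfl⟩ := hv₁
  have hF (x : X) : (F x).Nonempty := convexHull_nonempty_iff.1 ⟨f x, hf x⟩
  have hconvΔ (x : X) : convexHull ℝ (F x) ⊆ Δf X := convexHull_min (hFΔ x) convex_Δf
  choose g hg hfg using fun z : X × X =>
    exists_mem_convexHull_dKR_le (hFΔ z.1) (hFΔ z.2) (hexp z.1 z.2) (hf z.1)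
  obtain ⟨γ, hγ, hcost⟩ := exists_isCoupling_dist_le_dKR hu₁ hu₂
  refine ⟨linearCombination ℝ g γ, ?_, ?_⟩
  · rw [← hγ.map_snd]
    exact linearCombination_mem_Fhat hF hγ.mem_Δf.1 Prod.snd hg
  · calc dKR (linearCombination ℝ f u₁) (linearCombination ℝ g γ)
        = dKR (linearCombination ℝ (fun z => f z.1) γ) (linearCombination ℝ g γ) := by
          rw [hγ.linearCombination_fst]
      _ ≤ linearCombination ℝ (fun z => dKR (f z.1) (g z)) γ :=
          dKR_linearCombination_le hγ.mem_Δf.1 (fun z => hconvΔ _ (hf z.1)) fun z => hconvΔ _ (hg z)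
      _ ≤ linearCombination ℝ (fun z => dist z.1 z.2) γ :=
          linearCombination_mono hγ.mem_Δf.1 fun z _ => hfg z
      _ ≤ dKR u₁ u₂ := hcost

/-- **Lemma 8 (Renault–Venel).** Let `(X,d)` be a compact metric space and
`F : X ⇉ Δ_f(X)` be nonempty-valued and non-expansive for `d_KR`. Then the mixed
extension `F̂` is 1-Lipschitz from `(Δ_f(X), d_KR)` to itself. -/
theorem stmt14 (X : Type*) [MetricSpace X] [CompactSpace X]
    (F : X → Set (X →₀ ℝ)) (hFne : ∀ x, (F x).Nonempty)
    (hFΔ : ∀ x, F x ⊆ Stmt14.Δf X)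
    (hexp : ∀ x x' : X, ∀ u ∈ F x, ∃ u' ∈ F x', Stmt14.dKR u u' ≤ dist x x')
    (u₁ u₂ : X →₀ ℝ) (hu₁ : u₁ ∈ Stmt14.Δf X) (hu₂ : u₂ ∈ Stmt14.Δf X)
    (v₁ : X →₀ ℝ) (hv₁ : v₁ ∈ Stmt14.Fhat F u₁) :
    ∃ v₂ ∈ Stmt14.Fhat F u₂, Stmt14.dKR v₁ v₂ ≤ Stmt14.dKR u₁ u₂ :=
  stmt14_general hFΔ hexp hu₁ hu₂ hv₁
end
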